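/- arXiv:1707.02628 — 2 statements merged into one kernel-verified Lean document; each statement's English description precedes it below -/
import Mathlib

section
/- There exists a real number x such that for every integer b ≥ 2 the sequence ({b^j x})_{j≥0} is uniformly distributed in [0,1) (so x is absolutely normal), and moreover for every integer b ≥ 2 there is a number N_0(b) such that for all N ≥ N_0(b) one has D_N(({b^j x})_{j≥0}) ≤ 3433 · b / √N. -/
open scoped Classical

/-- The discrepancy of the first `N` elements of a sequence of reals:
`D_N((x_j)) = sup_{0 ≤ α₁ < α₂ ≤ 1} |#{j < N : α₁ ≤ x_j < α₂}/N − (α₂ − α₁)|`. -/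
noncomputable def disc (N : ℕ) (x : ℕ → ℝ) : ℝ :=
  ⨆ p : {p : ℝ × ℝ // 0 ≤ p.1 ∧ p.1 < p.2 ∧ p.2 ≤ 1},
    |(((Finset.range N).filter fun j => p.1.1 ≤ x j ∧ x j < p.1.2).card : ℝ) / N -
      (p.1.2 - p.1.1)|

lemma sum_split (A B : ℕ) (f : ℕ → ℝ) :
    ∑ a ∈ Finset.range (A * B), f a =
      ∑ y ∈ Finset.range A, ∑ c ∈ Finset.range B, f (y * B + c) := by
  induction A with
  | zero => simp
  | succ A ih =>
    rw [Nat.succ_mul, Finset.sum_range_add, ih, Finset.sum_range_succ]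

lemma card_real (s : Finset ℕ) (P : ℕ → Prop) [DecidablePred P] :
    ((s.filter P).card : ℝ) = ∑ a ∈ s, if P a then (1:ℝ) else 0 := by
  simp

/-- partial sums over the base-`Q` digits of `c`, most significant first -/
noncomputable def Wsum (Q : ℕ) (X : ℕ → ℝ) (m c N : ℕ) : ℝ :=
  ∑ i ∈ Finset.range N, X (c / Q ^ (m - 1 - i) % Q)

lemma Wsum_zero (Q : ℕ) (X : ℕ → ℝ) (m c : ℕ) : Wsum Q X m c 0 = 0 := by simp [Wsum]

lemma Wsum_succ (Q : ℕ) (X : ℕ → ℝ) (m y c N : ℕ) (hy : y < Q) (hc : c < Q ^ m) (hN : N ≤ m) :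
    Wsum Q X (m + 1) (y * Q ^ m + c) (N + 1) = X y + Wsum Q X m c N := by
  unfold Wsum
  have hQ : 0 < Q := by omega
  rw [Finset.sum_range_succ', add_comm]
  congr 1
  · have : (y * Q ^ m + c) / Q ^ m = y := by
      rw [mul_comm, Nat.mul_add_div (by positivity), Nat.div_eq_of_lt hc, add_zero]
    simp [this, Nat.mod_eq_of_lt hy]
  · apply Finset.sum_congr rfl
    intro i hi
    have hi := Finset.mem_range.1 hi
    have e1 : m + 1 - 1 - (i + 1) = m - 1 - i := by omega
    rw [e1]
    have e2 : y * Q ^ m + c = Q ^ (m - 1 - i) * (Q * (y * Q ^ i)) + c := by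
      have : Q ^ m = Q ^ (m - 1 - i) * Q * Q ^ i := by
        rw [← pow_succ, ← pow_add]; congr 1; omega
      rw [this]; ring
    rw [e2, Nat.mul_add_div (by positivity), Nat.mul_add_mod]

lemma maximal (Q : ℕ) (hQ : 0 < Q) (X : ℕ → ℝ) (v κ : ℝ) (hv : 0 ≤ v)
    (h1 : ∑ y ∈ Finset.range Q, X y = 0)
    (h2 : ∑ y ∈ Finset.range Q, X y ^ 2 = v * Q)
    (h3 : ∑ y ∈ Finset.range Q, X y ^ 3 = κ * Q)
    (h4 : ∑ y ∈ Finset.range Q, X y ^ 4 ≤ v * Q)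
    (hκ : |κ| ≤ v) (t : ℝ) (ht : 0 < t) (m : ℕ) : ∀ s : ℝ,
    (((Finset.range (Q ^ m)).filter fun c => ∃ N ≤ m, t ≤ |s + Wsum Q X m c N|).card : ℝ) * t ^ 4
      ≤ (Q : ℝ) ^ m * (s ^ 4 + 6 * m * v * s ^ 2 + 4 * m * κ * s + 3 * m ^ 2 * v ^ 2 + m * v) := by
  have hpos : ∀ (m : ℕ) (s : ℝ), s ^ 4 ≤
      s ^ 4 + 6 * m * v * s ^ 2 + 4 * m * κ * s + 3 * m ^ 2 * v ^ 2 + m * v := by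
    intro m s
    have hm : (0:ℝ) ≤ m := Nat.cast_nonneg m
    have a1 : -(v * |s|) ≤ κ * s := by
      have : |κ * s| ≤ v * |s| := by
        rw [abs_mul]; exact mul_le_mul_of_nonneg_right hκ (abs_nonneg s)
      exact (abs_le.1 this).1
    have a2 : 4 * (v * |s|) ≤ 6 * v * s ^ 2 + v := by
      have : 4 * |s| ≤ 6 * s ^ 2 + 1 := by
        rw [← sq_abs s]; nlinarith [sq_nonneg (2 * |s| - 1), sq_nonneg (|s|)]
      nlinarith
    have a3 : 0 ≤ (m:ℝ) * (6 * v * s ^ 2 + 4 * (κ * s) + v) := mul_nonneg hm (by linarith)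
    have a4 : 0 ≤ 3 * (m:ℝ) ^ 2 * v ^ 2 := by positivity
    linarith
  have hbig : ∀ (m : ℕ) (s : ℝ), t ≤ |s| →
    (((Finset.range (Q ^ m)).filter fun c => ∃ N ≤ m, t ≤ |s + Wsum Q X m c N|).card : ℝ) * t ^ 4
      ≤ (Q : ℝ) ^ m * (s ^ 4 + 6 * m * v * s ^ 2 + 4 * m * κ * s + 3 * m ^ 2 * v ^ 2 + m * v) := by
    intro m s hs
    apply mul_le_mul
    · exact_mod_cast (Finset.card_filter_le _ _).trans (by simp)
    · refine le_trans ?_ (hpos m s)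
      rw [← Even.pow_abs (by decide : Even 4) s]
      gcongr
    · positivity
    · positivity
  induction m with
  | zero =>
    intro s
    by_cases hs : t ≤ |s|
    · exact hbig 0 s hs
    · rw [card_real, Finset.sum_eq_zero]
      · simp
        positivity
      · intro c _
        rw [if_neg]
        rintro ⟨N, hN, hP⟩
        obtain rfl : N = 0 := by omega
        rw [Wsum_zero, add_zero] at hP
        exact hs hP
  | succ m ih =>
    intro s
    by_cases hs : t ≤ |s|
    · exact hbig (m + 1) s hs
    · rw [card_real, pow_succ', sum_split]
      have key : ∀ y ∈ Finset.range Q,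
          (∑ c ∈ Finset.range (Q ^ m), if (∃ N ≤ m + 1, t ≤ |s + Wsum Q X (m + 1) (y * Q ^ m + c) N|)
            then (1:ℝ) else 0) * t ^ 4 ≤ (Q : ℝ) ^ m * ((s + X y) ^ 4 + 6 * m * v * (s + X y) ^ 2
              + 4 * m * κ * (s + X y) + 3 * m ^ 2 * v ^ 2 + m * v) := by
        intro y hy
        have hy := Finset.mem_range.1 hy
        rw [← card_real]
        refine le_trans ?_ (ih (s + X y))
        apply mul_le_mul_of_nonneg_right _ (by positivity)
        refine Nat.cast_le.2 (Finset.card_le_card ?_)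
        intro c hc
        rw [Finset.mem_filter] at hc ⊢
        obtain ⟨hc, N, hN, hP⟩ := hc
        refine ⟨hc, ?_⟩
        have hc := Finset.mem_range.1 hc
        rcases N with _ | N
        · rw [Wsum_zero, add_zero] at hP
          exact absurd hP hs
        · refine ⟨N, by omega, ?_⟩
          rw [Wsum_succ Q X m y c N hy hc (by omega)] at hP
          rwa [add_assoc]
      rw [Finset.sum_mul]
      refine (Finset.sum_le_sum key).trans ?_
      rw [← Finset.mul_sum, pow_succ (Q:ℝ) m, mul_assoc ((Q:ℝ) ^ m)]
      apply mul_le_mul_of_nonneg_left _ (by positivity)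
      have ex : ∀ y, (s + X y) ^ 4 + 6 * m * v * (s + X y) ^ 2
              + 4 * m * κ * (s + X y) + 3 * m ^ 2 * v ^ 2 + m * v =
          (s ^ 4 + 6 * m * v * s ^ 2 + 4 * m * κ * s + 3 * m ^ 2 * v ^ 2 + m * v)
          + (4 * s ^ 3 + 12 * m * v * s + 4 * m * κ) * X y + (6 * s ^ 2 + 6 * m * v) * X y ^ 2
          + 4 * s * X y ^ 3 + X y ^ 4 := by intro y; ring
      simp_rw [ex]
      rw [Finset.sum_add_distrib, Finset.sum_add_distrib, Finset.sum_add_distrib,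
        Finset.sum_add_distrib, ← Finset.mul_sum, ← Finset.mul_sum, ← Finset.mul_sum, h1, h2, h3]
      simp only [Finset.sum_const, Finset.card_range, nsmul_eq_mul]
      push_cast
      have hv2 : 0 ≤ v ^ 2 * (Q:ℝ) := by positivity
      nlinarith [h4, hv2]

/-- centered indicator of a prefix interval -/
noncomputable def Xf (b k e : ℕ) (y : ℕ) : ℝ :=
  (if e / b * b ≤ y ∧ y < e then 1 else 0) - ((e % b : ℕ) : ℝ) / (b : ℝ) ^ k

lemma Xf_maximal (b k e m : ℕ) (hb : 2 ≤ b) (he : e < b ^ k) (p : ℝ)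
    (hp : ((e % b : ℕ) : ℝ) / (b : ℝ) ^ k ≤ p) (t : ℝ) (ht : 0 < t) :
    (((Finset.range ((b ^ k) ^ m)).filter fun c =>
      ∃ N ≤ m, t ≤ |Wsum (b ^ k) (Xf b k e) m c N|).card : ℝ) * t ^ 4
      ≤ ((b : ℝ) ^ k) ^ m * (3 * m ^ 2 * p ^ 2 + m * p) := by
  have hbr : (0:ℝ) < (b:ℝ) ^ k := by positivity
  set q : ℝ := ((e % b : ℕ) : ℝ) / (b : ℝ) ^ k with hq
  have hq0 : 0 ≤ q := by positivity
  have hq1 : q ≤ 1 := by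
    rw [hq, div_le_one hbr]
    exact_mod_cast (Nat.mod_le e b).trans he.le
  have hI : ∑ y ∈ Finset.range (b ^ k), (if e / b * b ≤ y ∧ y < e then (1:ℝ) else 0) =
      q * (b:ℝ) ^ k := by
    rw [← card_real, hq, div_mul_cancel₀ _ hbr.ne']
    have : (Finset.range (b ^ k)).filter (fun y => e / b * b ≤ y ∧ y < e)
        = Finset.Ico (e / b * b) e := by
      ext y; simp; omega
    rw [this, Nat.card_Ico]
    congr 1
    have := Nat.div_add_mod' e b
    omega
  have gen : ∀ A B : ℝ, ∑ y ∈ Finset.range (b ^ k),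
      ((A * if e / b * b ≤ y ∧ y < e then (1:ℝ) else 0) + B) = (A * q + B) * ((b ^ k : ℕ) : ℝ) := by
    intro A B
    rw [Finset.sum_add_distrib, ← Finset.mul_sum, hI]
    simp; ring
  have h := maximal (b ^ k) (by positivity) (Xf b k e) (q * (1 - q)) (q * (1 - q) * (1 - 2 * q))
    (by nlinarith) ?_ ?_ ?_ ?_ ?_ t ht m 0
  · simp only [zero_add] at h
    refine h.trans ?_
    push_cast
    apply mul_le_mul_of_nonneg_left _ (by positivity)
    have hvp : q * (1 - q) ≤ p := by nlinarith
    have hv0 : 0 ≤ q * (1 - q) := by nlinarith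
    have : (q * (1 - q)) ^ 2 ≤ p ^ 2 := by gcongr
    have : (m:ℝ) ^ 2 * (q * (1 - q)) ^ 2 ≤ m ^ 2 * p ^ 2 := by gcongr
    have : (m:ℝ) * (q * (1 - q)) ≤ m * p := by gcongr
    nlinarith
  · rw [Finset.sum_congr rfl (g := fun y => (1 * if e / b * b ≤ y ∧ y < e then (1:ℝ) else 0) + (-q))]
    · rw [gen]; ring
    · intro y _; unfold Xf; rw [← hq]; ring
  · rw [Finset.sum_congr rfl (g := fun y => ((1 - 2 * q) * if e / b * b ≤ y ∧ y < e then (1:ℝ) else 0) + q ^ 2)]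
    · rw [gen]; ring
    · intro y _; unfold Xf; rw [← hq]; split_ifs <;> ring
  · rw [Finset.sum_congr rfl (g := fun y => (((1 - q) ^ 3 + q ^ 3) * if e / b * b ≤ y ∧ y < e then (1:ℝ) else 0) - q ^ 3)]
    · simp_rw [sub_eq_add_neg]
      rw [gen]; ring
    · intro y _; unfold Xf; rw [← hq]; split_ifs <;> ring
  · rw [Finset.sum_congr rfl (g := fun y => (((1 - q) ^ 4 - q ^ 4) * if e / b * b ≤ y ∧ y < e then (1:ℝ) else 0) + q ^ 4)]
    · rw [gen]
      apply mul_le_mul_of_nonneg_right _ (by positivity)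
      have : 0 ≤ q * (1 - q) := by nlinarith
      have : 0 ≤ (q * (1 - q)) ^ 2 := by positivity
      nlinarith
    · intro y _; unfold Xf; rw [← hq]; split_ifs <;> ring
  · have hv0 : 0 ≤ q * (1 - q) := by nlinarith
    rw [abs_mul, abs_of_nonneg hv0]
    have : |1 - 2 * q| ≤ 1 := by rw [abs_le]; constructor <;> linarith
    nlinarith

lemma card_transfer (R D h : ℕ) (P : ℕ → Prop) [DecidablePred P] (hh : 0 < h) :
    (((Finset.range (R * (D * h))).filter fun a => P (a / h % D)).card : ℝ) =
      R * h * ((Finset.range D).filter P).card := by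
  rw [card_real, card_real, sum_split]
  have : ∀ y ∈ Finset.range R, ∑ c ∈ Finset.range (D * h),
      (if P ((y * (D * h) + c) / h % D) then (1:ℝ) else 0) =
      h * ∑ c ∈ Finset.range D, if P c then (1:ℝ) else 0 := by
    intro y _
    rw [sum_split, Finset.mul_sum]
    apply Finset.sum_congr rfl
    intro c hc
    have hc := Finset.mem_range.1 hc
    rw [Finset.sum_congr rfl (g := fun _ => if P c then (1:ℝ) else 0)]
    · simp
    · intro d hd
      have hd := Finset.mem_range.1 hd
      have : (y * (D * h) + (c * h + d)) / h % D = c := by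
        have : y * (D * h) + (c * h + d) = h * (D * y + c) + d := by ring
        rw [this, Nat.mul_add_div hh, Nat.div_eq_of_lt hd, add_zero, Nat.mul_add_mod,
          Nat.mod_eq_of_lt hc]
      rw [this]
  rw [Finset.sum_congr rfl this]
  simp; ring


def win (b H a j k : ℕ) : ℕ := a / b ^ (H - j - k) % b ^ k

lemma bad_card (b H k e r : ℕ) (hb : 2 ≤ b) (hk : 0 < k) (hr : r ≤ H) (he : e < b ^ k) (p : ℝ)
    (hp : ((e % b : ℕ) : ℝ) / (b : ℝ) ^ k ≤ p) (t : ℝ) (ht : 0 < t) :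
    (((Finset.range (b ^ H)).filter fun a => ∃ N, r + k * N ≤ H ∧
      t ≤ |∑ i ∈ Finset.range N, Xf b k e (win b H a (r + k * i) k)|).card : ℝ) * t ^ 4
      ≤ (b : ℝ) ^ H * (3 * (((H - r) / k : ℕ) : ℝ) ^ 2 * p ^ 2 + (((H - r) / k : ℕ) : ℝ) * p) := by
  set m := (H - r) / k with hm
  have hkm : k * m ≤ H - r := Nat.mul_div_le _ _
  set h0 := H - r - k * m with hh0
  have hbH : b ^ H = b ^ r * ((b ^ k) ^ m * b ^ h0) := by
    rw [← pow_mul, ← pow_add, ← pow_add]; congr 1; omega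
  have hle : (((Finset.range (b ^ H)).filter fun a => ∃ N, r + k * N ≤ H ∧
      t ≤ |∑ i ∈ Finset.range N, Xf b k e (win b H a (r + k * i) k)|).card : ℝ) ≤
      ((Finset.range (b ^ r * ((b ^ k) ^ m * b ^ h0))).filter fun a =>
        (fun c => ∃ N ≤ m, t ≤ |Wsum (b ^ k) (Xf b k e) m c N|) (a / b ^ h0 % (b ^ k) ^ m)).card := by
    rw [hbH]
    refine Nat.cast_le.2 (Finset.card_le_card ?_)
    intro a ha
    rw [Finset.mem_filter] at ha ⊢
    obtain ⟨ha, N, hN, hP⟩ := ha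
    refine ⟨ha, N, ?_, ?_⟩
    · rw [hm, Nat.le_div_iff_mul_le hk, mul_comm]; omega
    · have hNm : N ≤ m := by rw [hm, Nat.le_div_iff_mul_le hk, mul_comm]; omega
      convert hP using 2
      unfold Wsum
      apply Finset.sum_congr rfl
      intro i hi
      have hi := Finset.mem_range.1 hi
      congr 1
      unfold win
      have e1 : (b ^ k) ^ m = (b ^ k) ^ (m - 1 - i) * (b ^ k * (b ^ k) ^ i) := by
        rw [← pow_succ', ← pow_add]; congr 1; omega
      have e2 : b ^ (H - (r + k * i) - k) = b ^ h0 * (b ^ k) ^ (m - 1 - i) := by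
        rw [← pow_mul, ← pow_add]; congr 1
        have : m = (m - 1 - i) + i + 1 := by omega
        have : k * m = k * (m - 1 - i) + k * i + k := by
          conv_lhs => rw [this]
          ring
        omega
      rw [e1, Nat.mod_mul_right_div_self, Nat.mod_mul_right_mod, Nat.div_div_eq_div_mul, e2]
  have htr := card_transfer (b ^ r) ((b ^ k) ^ m) (b ^ h0)
    (fun c => ∃ N ≤ m, t ≤ |Wsum (b ^ k) (Xf b k e) m c N|) (by positivity)
  replace hle := hle.trans (le_of_eq (by convert htr))
  have hmax := Xf_maximal b k e m hb he p hp t ht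
  have hbHr : (b:ℝ) ^ H = (b:ℝ) ^ r * (b:ℝ) ^ h0 * ((b:ℝ) ^ k) ^ m := by
    have := congrArg (fun n : ℕ => (n:ℝ)) hbH
    push_cast at this
    rw [this]; ring
  rw [hbHr]
  refine (mul_le_mul_of_nonneg_right hle (by positivity)).trans ?_
  push_cast
  rw [mul_assoc, mul_assoc ((b:ℝ) ^ r * (b:ℝ) ^ h0)]
  exact mul_le_mul_of_nonneg_left hmax (by positivity)

noncomputable def tau (b H k : ℕ) : ℝ := 300 * b * Real.sqrt H * ((9 / 10 : ℝ) ^ k / 10)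

noncomputable def BadSet (b H : ℕ) : Finset ℕ :=
  (Finset.range (Nat.log b H)).biUnion fun k => (Finset.range (b ^ (k + 1))).biUnion fun e =>
    (Finset.range (k + 1)).biUnion fun r =>
      (Finset.range (b ^ H)).filter fun a => ∃ N, r + (k + 1) * N ≤ H ∧
        tau b H k / (k + 1) ≤
          |∑ i ∈ Finset.range N, Xf b (k + 1) e (win b H a (r + (k + 1) * i) (k + 1))|

lemma tele (K : ℕ) : ∑ k ∈ Finset.range K,
    (3 * ((k:ℝ) + 1) ^ 3 + ((k:ℝ) + 1) ^ 4 / 2) * (763 / 1000 : ℝ) ^ k ≤ 15758 := by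
  have : ∀ K : ℕ, ∑ k ∈ Finset.range K,
    (3 * ((k:ℝ) + 1) ^ 3 + ((k:ℝ) + 1) ^ 4 / 2) * (763 / 1000 : ℝ) ^ k ≤
      15758 - (2.2 * ((K:ℝ) + 1) ^ 4 + 41 * ((K:ℝ) + 1) ^ 3 + 439 * ((K:ℝ) + 1) ^ 2
        + 3252 * ((K:ℝ) + 1) + 12023) * (763 / 1000 : ℝ) ^ K := by
    intro K
    induction K with
    | zero => norm_num
    | succ K ih =>
      rw [Finset.sum_range_succ, pow_succ (763 / 1000 : ℝ) K]
      have hx : (0:ℝ) < (763 / 1000 : ℝ) ^ K := by positivity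
      have hK : (0:ℝ) ≤ K := Nat.cast_nonneg K
      push_cast
      have : (3 * ((K:ℝ) + 1) ^ 3 + ((K:ℝ) + 1) ^ 4 / 2) +
        (2.2 * ((K:ℝ) + 1 + 1) ^ 4 + 41 * ((K:ℝ) + 1 + 1) ^ 3 + 439 * ((K:ℝ) + 1 + 1) ^ 2
        + 3252 * ((K:ℝ) + 1 + 1) + 12023) * (763 / 1000) ≤
        (2.2 * ((K:ℝ) + 1) ^ 4 + 41 * ((K:ℝ) + 1) ^ 3 + 439 * ((K:ℝ) + 1) ^ 2
        + 3252 * ((K:ℝ) + 1) + 12023) := by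
        rw [← sub_nonneg]
        ring_nf
        positivity
      have := mul_le_mul_of_nonneg_right this hx.le
      linarith
  refine (this K).trans ?_
  have : 0 ≤ (2.2 * ((K:ℝ) + 1) ^ 4 + 41 * ((K:ℝ) + 1) ^ 3 + 439 * ((K:ℝ) + 1) ^ 2
        + 3252 * ((K:ℝ) + 1) + 12023) * (763 / 1000 : ℝ) ^ K := by positivity
  linarith

lemma term_bound (b H k m : ℕ) (hb : 2 ≤ b) (hk : b ^ (k + 1) ≤ H) (c : ℝ)
    (hm : m * (k + 1) ≤ H)
    (hc : c * (tau b H k / (k + 1)) ^ 4 ≤ (b:ℝ) ^ H * (3 * (m:ℝ) ^ 2 * (1 / (b:ℝ) ^ k) ^ 2 + m * (1 / (b:ℝ) ^ k))) :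
    (b:ℝ) ^ (k + 1) * ((k:ℝ) + 1) * c ≤ (b:ℝ) ^ H * (1 / (810000 * (b:ℝ) ^ 3)) *
      ((3 * ((k:ℝ) + 1) ^ 3 + ((k:ℝ) + 1) ^ 4 / 2) * (763 / 1000 : ℝ) ^ k) := by
  have hb' : (2:ℝ) ≤ b := by exact_mod_cast hb
  have hb0 : (0:ℝ) < b := by linarith
  have hH0 : 0 < H := lt_of_lt_of_le (by positivity) hk
  have hH : (0:ℝ) < H := by exact_mod_cast hH0
  set κ : ℝ := (k:ℝ) + 1 with hκ
  have hκ0 : 0 < κ := by positivity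
  set B : ℝ := (b:ℝ) ^ k with hB
  have hB0 : 0 < B := by positivity
  set y : ℝ := (6561 / 10000 : ℝ) ^ k with hy
  have hy0 : 0 < y := by positivity
  set x : ℝ := (763 / 1000 : ℝ) ^ k with hx
  have hx0 : 0 < x := by positivity
  have hxy : 1 ≤ x * B * y := by
    rw [hx, hB, hy, ← mul_pow, ← mul_pow]
    apply one_le_pow₀
    nlinarith
  have hkH : B * b ≤ H := by
    rw [hB, ← pow_succ]; exact_mod_cast hk
  have hmr : (m:ℝ) ≤ H / κ := by
    rw [le_div_iff₀ hκ0, hκ]; exact_mod_cast hm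
  have htau : (tau b H k / κ) ^ 4 = 810000 * (b:ℝ) ^ 4 * (H:ℝ) ^ 2 * y / κ ^ 4 := by
    unfold tau
    rw [div_pow, mul_pow, mul_pow, mul_pow, div_pow, ← pow_mul, mul_comm k 4, pow_mul, hy]
    have : Real.sqrt H ^ 4 = (H:ℝ) ^ 2 := by
      rw [show 4 = 2 * 2 from rfl, pow_mul, Real.sq_sqrt hH.le]
    rw [this]
    norm_num
    ring
  have hden : 0 < 810000 * (b:ℝ) ^ 4 * (H:ℝ) ^ 2 * y := by positivity
  rw [htau] at hc
  have hc1 : c * (810000 * (b:ℝ) ^ 4 * (H:ℝ) ^ 2 * y / κ ^ 4) ≤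
      (b:ℝ) ^ H * (3 * (H / κ) ^ 2 * (1 / B) ^ 2 + (H / κ) * (1 / B)) := by
    refine hc.trans ?_
    gcongr
  have hc2 : c ≤ (b:ℝ) ^ H * (3 * (H / κ) ^ 2 * (1 / B) ^ 2 + (H / κ) * (1 / B)) * κ ^ 4 /
      (810000 * (b:ℝ) ^ 4 * (H:ℝ) ^ 2 * y) := by
    rw [le_div_iff₀ hden]
    calc c * (810000 * (b:ℝ) ^ 4 * (H:ℝ) ^ 2 * y)
        = c * (810000 * (b:ℝ) ^ 4 * (H:ℝ) ^ 2 * y / κ ^ 4) * κ ^ 4 := by field_simp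
      _ ≤ _ := by gcongr
  calc (b:ℝ) ^ (k + 1) * κ * c ≤ (b:ℝ) ^ (k + 1) * κ *
      ((b:ℝ) ^ H * (3 * (H / κ) ^ 2 * (1 / B) ^ 2 + (H / κ) * (1 / B)) * κ ^ 4 /
      (810000 * (b:ℝ) ^ 4 * (H:ℝ) ^ 2 * y)) := by gcongr
    _ = (b:ℝ) ^ H * (1 / (810000 * (b:ℝ) ^ 3)) * ((3 * κ ^ 3 + κ ^ 4 * (B / H)) * (1 / (B * y))) := by
      rw [pow_succ, ← hB]; field_simp
    _ ≤ (b:ℝ) ^ H * (1 / (810000 * (b:ℝ) ^ 3)) * ((3 * κ ^ 3 + κ ^ 4 / 2) * x) := by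
      have h1 : B / H ≤ 1 / 2 := by
        rw [div_le_div_iff₀ hH (by norm_num)]; nlinarith
      have h2 : 1 / (B * y) ≤ x := by
        rw [div_le_iff₀ (by positivity)]; nlinarith
      have h3 : κ ^ 4 * (B / H) ≤ κ ^ 4 / 2 := by
        rw [div_eq_mul_one_div (κ ^ 4)]; gcongr
      gcongr

lemma BadSet_card (b H : ℕ) (hb : 2 ≤ b) :
    24 * ((BadSet b H).card : ℝ) * (b * (b - 1)) ≤ (b:ℝ) ^ H := by
  have hb' : (2:ℝ) ≤ b := by exact_mod_cast hb
  have hb0 : (0:ℝ) < b := by linarith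
  rcases Nat.eq_zero_or_pos H with rfl | hHpos
  · simp [BadSet]
  have main : ((BadSet b H).card : ℝ) ≤ ∑ k ∈ Finset.range (Nat.log b H),
      (b:ℝ) ^ H * (1 / (810000 * (b:ℝ) ^ 3)) *
      ((3 * ((k:ℝ) + 1) ^ 3 + ((k:ℝ) + 1) ^ 4 / 2) * (763 / 1000 : ℝ) ^ k) := by
    have h1 : ((BadSet b H).card : ℝ) ≤ ∑ k ∈ Finset.range (Nat.log b H),
        ∑ e ∈ Finset.range (b ^ (k + 1)), ∑ r ∈ Finset.range (k + 1),
        (((Finset.range (b ^ H)).filter fun a => ∃ N, r + (k + 1) * N ≤ H ∧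
        tau b H k / (k + 1) ≤
          |∑ i ∈ Finset.range N, Xf b (k + 1) e (win b H a (r + (k + 1) * i) (k + 1))|).card : ℝ) := by
      unfold BadSet
      refine (Nat.cast_le.2 Finset.card_biUnion_le).trans ?_
      push_cast
      refine Finset.sum_le_sum fun k _ => ?_
      refine (Nat.cast_le.2 Finset.card_biUnion_le).trans ?_
      push_cast
      refine Finset.sum_le_sum fun e _ => ?_
      refine (Nat.cast_le.2 Finset.card_biUnion_le).trans ?_
      push_cast
      exact le_rfl
    refine h1.trans (Finset.sum_le_sum fun k hk => ?_)
    have hk := Finset.mem_range.1 hk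
    have hkH : b ^ (k + 1) ≤ H := Nat.pow_le_of_le_log hHpos.ne' hk
    have hkk : k + 1 < b ^ (k + 1) := Nat.lt_pow_self (by omega)
    set Z := (b:ℝ) ^ H * (1 / (810000 * (b:ℝ) ^ 3)) *
      ((3 * ((k:ℝ) + 1) ^ 3 + ((k:ℝ) + 1) ^ 4 / 2) * (763 / 1000 : ℝ) ^ k) with hZ
    have hH : (0:ℝ) < H := by exact_mod_cast hHpos
    have : ∀ e ∈ Finset.range (b ^ (k + 1)), ∀ r ∈ Finset.range (k + 1),
        (((Finset.range (b ^ H)).filter fun a => ∃ N, r + (k + 1) * N ≤ H ∧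
        tau b H k / (k + 1) ≤
          |∑ i ∈ Finset.range N, Xf b (k + 1) e (win b H a (r + (k + 1) * i) (k + 1))|).card : ℝ)
        ≤ Z / ((b:ℝ) ^ (k + 1) * ((k:ℝ) + 1)) := by
      intro e he r hr
      have he := Finset.mem_range.1 he
      have hr := Finset.mem_range.1 hr
      rw [le_div_iff₀ (by positivity), mul_comm]
      have hp : ((e % b : ℕ) : ℝ) / (b : ℝ) ^ (k + 1) ≤ 1 / (b:ℝ) ^ k := by
        rw [div_le_div_iff₀ (by positivity) (by positivity), pow_succ, one_mul, mul_comm]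
        have : ((e % b : ℕ) : ℝ) ≤ b := by exact_mod_cast (Nat.mod_lt e (by omega)).le
        gcongr
      have ht : 0 < tau b H k / ((k:ℝ) + 1) := by unfold tau; positivity
      have hbc := bad_card b H (k + 1) e r hb (by omega) (by omega) he _ hp _ ht
      refine term_bound b H k ((H - r) / (k + 1)) hb hkH _ ?_ hbc
      exact (Nat.div_mul_le_self _ _).trans (by omega)
    refine (Finset.sum_le_sum fun e he => Finset.sum_le_sum fun r hr => this e he r hr).trans ?_
    simp only [Finset.sum_const, Finset.card_range, nsmul_eq_mul]
    push_cast
    apply le_of_eq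
    field_simp
  rw [← Finset.mul_sum] at main
  have ht := tele (Nat.log b H)
  have : ((BadSet b H).card : ℝ) ≤ (b:ℝ) ^ H * (1 / (810000 * (b:ℝ) ^ 3)) * 15758 :=
    main.trans (by gcongr)
  calc 24 * ((BadSet b H).card : ℝ) * (b * (b - 1))
      ≤ 24 * ((b:ℝ) ^ H * (1 / (810000 * (b:ℝ) ^ 3)) * 15758) * (b * (b - 1)) := by
        have : (0:ℝ) ≤ b - 1 := by linarith
        gcongr
    _ = (b:ℝ) ^ H * ((24 * 15758 / 810000) * ((b - 1) / b ^ 2)) := by field_simp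
    _ ≤ (b:ℝ) ^ H * 1 := by
        gcongr
        have : ((b:ℝ) - 1) / b ^ 2 ≤ 1 := by
          rw [div_le_one (by positivity)]; nlinarith
        nlinarith
    _ = _ := mul_one _


lemma residue_sum (k : ℕ) (hk : 0 < k) (f : ℕ → ℝ) (N : ℕ) :
    ∑ j ∈ Finset.range N, f j =
      ∑ r ∈ Finset.range k, ∑ i ∈ Finset.range ((N + k - 1 - r) / k), f (r + k * i) := by
  induction N with
  | zero =>
    symm
    simp only [Finset.range_zero, Finset.sum_empty]
    apply Finset.sum_eq_zero
    intro r hr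
    rw [Nat.div_eq_of_lt (by omega)]
    simp
  | succ N ih =>
    rw [Finset.sum_range_succ, ih]
    have hstep : ∀ r ∈ Finset.range k,
        ∑ i ∈ Finset.range ((N + 1 + k - 1 - r) / k), f (r + k * i) =
        ∑ i ∈ Finset.range ((N + k - 1 - r) / k), f (r + k * i) +
          if r = N % k then f N else 0 := by
      intro r hr
      have hr := Finset.mem_range.1 hr
      have e1 : N + 1 + k - 1 - r = (N + k - 1 - r) + 1 := by omega
      have hd := Nat.div_add_mod N k
      have hml := Nat.mod_lt N hk
      rw [e1, Nat.succ_div]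
      by_cases h : r = N % k
      · have e2 : N + k - 1 - r + 1 = k * (N / k + 1) := by
          rw [mul_add, mul_one]; omega
        have e3 : (N + k - 1 - r) / k = N / k := by
          apply Nat.div_eq_of_lt_le
          · rw [mul_comm]; omega
          · rw [mul_comm, mul_add, mul_one]; omega
        rw [if_pos h, if_pos (by rw [e2]; exact dvd_mul_right _ _), Finset.sum_range_succ, e3]
        congr 2
        omega
      · rw [if_neg h, if_neg, add_zero, add_zero]
        rintro ⟨c, hc⟩
        apply h
        have hNr : N + k = r + k * c := by omega
        have : (N + k) % k = (r + k * c) % k := by rw [hNr]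
        rw [Nat.add_mod_right, Nat.add_mul_mod_self_left, Nat.mod_eq_of_lt hr] at this
        exact this.symm
    rw [Finset.sum_congr rfl hstep, Finset.sum_add_distrib]
    congr 1
    rw [Finset.sum_ite_eq' (Finset.range k) (N % k) (fun _ => f N),
      if_pos (Finset.mem_range.2 (Nat.mod_lt N hk))]

lemma good_level (b H a : ℕ) (hb : 2 ≤ b) (ha : a < b ^ H) (hbad : a ∉ BadSet b H)
    (N k e : ℕ) (hN : N + Nat.log b H ≤ H) (hk : k < Nat.log b H) (he : e < b ^ (k + 1)) :
    |∑ j ∈ Finset.range N, Xf b (k + 1) e (win b H a j (k + 1))| ≤ tau b H k := by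
  rw [residue_sum (k + 1) (by omega)]
  refine (Finset.abs_sum_le_sum_abs _ _).trans ?_
  have : ∀ r ∈ Finset.range (k + 1),
      |∑ i ∈ Finset.range ((N + (k + 1) - 1 - r) / (k + 1)),
        Xf b (k + 1) e (win b H a (r + (k + 1) * i) (k + 1))| ≤ tau b H k / (k + 1) := by
    intro r hr
    by_contra hcon
    apply hbad
    unfold BadSet
    simp only [Finset.mem_biUnion]
    refine ⟨k, Finset.mem_range.2 hk, e, Finset.mem_range.2 he, r, hr, ?_⟩
    rw [Finset.mem_filter]
    refine ⟨Finset.mem_range.2 ha, (N + (k + 1) - 1 - r) / (k + 1), ?_, (not_le.1 hcon).le⟩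
    have := Nat.mul_div_le (N + (k + 1) - 1 - r) (k + 1)
    have hr := Finset.mem_range.1 hr
    omega
  refine (Finset.sum_le_sum this).trans (le_of_eq ?_)
  simp only [Finset.sum_const, Finset.card_range, nsmul_eq_mul]
  push_cast
  field_simp

lemma win_div (b H a j k : ℕ) (hj : j + k + 1 ≤ H) :
    win b H a j (k + 1) / b = win b H a j k := by
  unfold win
  have e1 : H - j - k = (H - j - (k + 1)) + 1 := by omega
  rw [e1, pow_succ b k, pow_succ b (H - j - (k + 1)), mul_comm (b ^ k) b,
    Nat.mod_mul_right_div_self, Nat.div_div_eq_div_mul]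

lemma good_sum (b H a : ℕ) (hb : 2 ≤ b) (ha : a < b ^ H) (hbad : a ∉ BadSet b H)
    (N : ℕ) (hN : N + Nat.log b H ≤ H) (k : ℕ) (hk : k ≤ Nat.log b H) : ∀ e : ℕ, e < b ^ k →
    |∑ j ∈ Finset.range N, ((if win b H a j k < e then (1:ℝ) else 0) - (e:ℝ) / (b:ℝ) ^ k)|
      ≤ ∑ i ∈ Finset.range k, tau b H i := by
  induction k with
  | zero =>
    intro e he
    obtain rfl : e = 0 := by simpa using he
    simp
  | succ k ih =>
    intro e he
    have hb0 : (0:ℝ) < b := by positivity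
    have h1 := ih (by omega) (e / b) (by rw [Nat.div_lt_iff_lt_mul (by omega), ← pow_succ]; exact he)
    have h2 := good_level b H a hb ha hbad N k e hN (by omega) he
    rw [Finset.sum_range_succ]
    have key : ∑ j ∈ Finset.range N, ((if win b H a j (k + 1) < e then (1:ℝ) else 0)
          - (e:ℝ) / (b:ℝ) ^ (k + 1)) =
        ∑ j ∈ Finset.range N, ((if win b H a j k < e / b then (1:ℝ) else 0)
          - ((e / b : ℕ):ℝ) / (b:ℝ) ^ k) +
        ∑ j ∈ Finset.range N, Xf b (k + 1) e (win b H a j (k + 1)) := by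
      rw [← Finset.sum_add_distrib]
      apply Finset.sum_congr rfl
      intro j hj
      have hj := Finset.mem_range.1 hj
      rw [← win_div b H a j k (by omega)]
      unfold Xf
      set w := win b H a j (k + 1)
      have hdm : ((e:ℕ):ℝ) = ((e / b : ℕ):ℝ) * b + ((e % b : ℕ):ℝ) := by
        exact_mod_cast (Nat.div_add_mod' e b).symm
      have hfrac : (e:ℝ) / (b:ℝ) ^ (k + 1) = ((e / b : ℕ):ℝ) / (b:ℝ) ^ k
          + ((e % b : ℕ) : ℝ) / (b : ℝ) ^ (k + 1) := by
        rw [hdm, pow_succ]; field_simp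
      rw [hfrac]
      have hbp : 0 < b := by omega
      have hiff : w / b < e / b ↔ w < e / b * b := Nat.div_lt_iff_lt_mul hbp
      have hle : e / b * b ≤ e := Nat.div_mul_le_self e b
      by_cases c1 : w < e / b * b
      · rw [if_pos (by omega), if_pos (hiff.2 c1), if_neg (by omega)]; ring
      · by_cases c2 : w < e
        · rw [if_pos c2, if_neg (by rw [hiff]; exact c1), if_pos (by omega)]; ring
        · rw [if_neg c2, if_neg (by rw [hiff]; exact c1), if_neg (by omega)]; ring
    rw [key]
    exact (abs_add_le _ _).trans (add_le_add h1 h2)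

lemma tau_sum (b H k : ℕ) : ∑ i ∈ Finset.range k, tau b H i ≤ 300 * b * Real.sqrt H := by
  unfold tau
  rw [← Finset.mul_sum]
  have : ∑ i ∈ Finset.range k, ((9 / 10 : ℝ) ^ i / 10) ≤ 1 := by
    have h : ∀ k : ℕ, ∑ i ∈ Finset.range k, ((9 / 10 : ℝ) ^ i / 10) = 1 - (9 / 10 : ℝ) ^ k := by
      intro k
      induction k with
      | zero => simp
      | succ k ih => rw [Finset.sum_range_succ, ih, pow_succ]; ring
    rw [h]
    have : (0:ℝ) ≤ (9 / 10 : ℝ) ^ k := by positivity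
    linarith
  calc _ ≤ 300 * b * Real.sqrt H * 1 := by gcongr
    _ = _ := mul_one _

lemma good_dev (b H a : ℕ) (hb : 2 ≤ b) (ha : a < b ^ H) (hbad : a ∉ BadSet b H)
    (N : ℕ) (hN : N + Nat.log b H ≤ H) (e : ℕ) (he : e ≤ b ^ Nat.log b H) :
    |∑ j ∈ Finset.range N, (if win b H a j (Nat.log b H) < e then (1:ℝ) else 0)
      - N * ((e:ℝ) / (b:ℝ) ^ Nat.log b H)| ≤ 300 * b * Real.sqrt H := by
  rcases he.lt_or_eq with he | he
  · have := (good_sum b H a hb ha hbad N hN _ le_rfl e he).trans (tau_sum b H _)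
    rw [Finset.sum_sub_distrib] at this
    simpa using this
  · subst he
    have : ∀ j ∈ Finset.range N, (if win b H a j (Nat.log b H) < b ^ Nat.log b H then (1:ℝ) else 0) = 1 := by
      intro j _
      rw [if_pos]
      exact Nat.mod_lt _ (by positivity)
    rw [Finset.sum_congr rfl this]
    have hb0 : (0:ℝ) < (b:ℝ) ^ Nat.log b H := by positivity
    push_cast
    rw [div_self hb0.ne']
    simp
    positivity

/-! selection of the next interval -/

lemma fibre_card (s : Finset ℕ) (P R a : ℕ) (hP : 0 < P) (hPR : P ≤ R) :
    ((s.filter fun v => v * P / R = a).card : ℝ) ≤ 3 * (R / P) := by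
  have hR : 0 < R := by omega
  have hsub : s.filter (fun v => v * P / R = a) ⊆
      Finset.Icc (a * R / P) (a * R / P + (R / P + 1)) := by
    intro v hv
    rw [Finset.mem_filter] at hv
    obtain ⟨_, hv⟩ := hv
    have h1 : a * R ≤ v * P := by rw [← hv]; exact Nat.div_mul_le_self _ _
    have h2 : v * P < (a + 1) * R := by rw [← hv, mul_comm (v * P / R + 1) R]; exact Nat.lt_mul_div_succ _ hR
    rw [Finset.mem_Icc]
    constructor
    · exact Nat.div_le_of_le_mul (by rw [mul_comm P v]; exact h1)
    · have h3 := Nat.lt_div_mul_add (a := a * R) hP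
      have h4 := Nat.lt_div_mul_add (a := R) hP
      by_contra hcon
      push Not at hcon
      have : (a * R / P + (R / P + 1) + 1) * P ≤ v * P := Nat.mul_le_mul_right P hcon
      nlinarith
  have hc := Finset.card_le_card hsub
  rw [Nat.card_Icc] at hc
  have hc2 : ((s.filter fun v => v * P / R = a).card : ℝ) ≤ ((R / P : ℕ) : ℝ) + 2 := by
    have : (s.filter fun v => v * P / R = a).card ≤ R / P + 2 := by
      generalize a * R / P = z at hc
      generalize R / P = y at hc ⊢
      omega
    exact_mod_cast this
  have h5 : ((R / P : ℕ) : ℝ) ≤ (R:ℝ) / P := Nat.cast_div_le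
  have h6 : (1:ℝ) ≤ (R:ℝ) / P := by
    rw [one_le_div (by exact_mod_cast hP)]; exact_mod_cast hPR
  linarith


lemma cell_div (b M M' n n' u : ℕ) (hb : 2 ≤ b) (hM : M ≤ M') (hn : n ≤ n') :
    u * 2 ^ (n' - n) * b ^ M' / 2 ^ n' / b ^ (M' - M) = u * b ^ M / 2 ^ n := by
  have e1 : (2:ℕ) ^ n' = 2 ^ n * 2 ^ (n' - n) := by rw [← pow_add]; congr 1; omega
  have e2 : b ^ M' = b ^ M * b ^ (M' - M) := by rw [← pow_add]; congr 1; omega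
  rw [Nat.div_div_eq_div_mul, e1]
  nth_rewrite 1 [e2]
  have e3 : u * 2 ^ (n' - n) * (b ^ M * b ^ (M' - M)) =
      (u * b ^ M) * (2 ^ (n' - n) * b ^ (M' - M)) := by ring
  rw [e3, mul_assoc (2 ^ n), Nat.mul_div_mul_right _ _ (by positivity)]

lemma stage_card (b M M' n n' u δ : ℕ) (Bad : Finset ℕ) (hb : 2 ≤ b) (hM : M ≤ M') (hn : n ≤ n')
    (h1 : 2 ^ n ≤ b ^ M) (h2 : b ^ M' ≤ 2 ^ n') (hδ : δ ≤ 1) :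
    (((Finset.Ico (u * 2 ^ (n' - n)) ((u + 1) * 2 ^ (n' - n))).filter fun v =>
      (v * b ^ M' / 2 ^ n' + δ) % b ^ (M' - M) ∈ Bad).card : ℝ) ≤
      12 * 2 ^ (n' - n) * Bad.card / (b:ℝ) ^ (M' - M) := by
  set s := Finset.Ico (u * 2 ^ (n' - n)) ((u + 1) * 2 ^ (n' - n)) with hs
  set h := b ^ (M' - M) with hh
  have hhpos : 0 < h := by positivity
  set Qs := Finset.Icc (u * b ^ M / 2 ^ n) ((u + 1) * b ^ M / 2 ^ n + 1) with hQs
  have hb0 : (0:ℝ) < b := by positivity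
  have hsub : (s.filter fun v => (v * b ^ M' / 2 ^ n' + δ) % h ∈ Bad) ⊆
      Qs.biUnion fun q => Bad.biUnion fun w =>
        s.filter fun v => v * b ^ M' / 2 ^ n' = q * h + w - δ := by
    intro v hv
    rw [Finset.mem_filter] at hv
    obtain ⟨hvs, hv⟩ := hv
    simp only [Finset.mem_biUnion]
    refine ⟨(v * b ^ M' / 2 ^ n' + δ) / h, ?_, (v * b ^ M' / 2 ^ n' + δ) % h, hv, ?_⟩
    · rw [hs, Finset.mem_Ico] at hvs
      rw [hQs, Finset.mem_Icc, ← cell_div b M M' n n' u hb hM hn,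
        ← cell_div b M M' n n' (u + 1) hb hM hn, ← hh]
      constructor
      · apply Nat.div_le_div_right
        refine le_trans ?_ (Nat.le_add_right _ _)
        apply Nat.div_le_div_right
        exact Nat.mul_le_mul_right _ hvs.1
      · have : (v * b ^ M' / 2 ^ n' + δ) / h ≤ (v * b ^ M' / 2 ^ n' + h) / h := by
          apply Nat.div_le_div_right; omega
        refine this.trans ?_
        rw [Nat.add_div_right _ hhpos]
        apply Nat.succ_le_succ
        apply Nat.div_le_div_right
        apply Nat.div_le_div_right
        exact Nat.mul_le_mul_right _ hvs.2.le
    · rw [Finset.mem_filter]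
      refine ⟨hvs, ?_⟩
      rw [Nat.div_add_mod', Nat.add_sub_cancel]
  have hcard : ((s.filter fun v => (v * b ^ M' / 2 ^ n' + δ) % h ∈ Bad).card : ℝ) ≤
      ∑ q ∈ Qs, ∑ w ∈ Bad, 3 * (((2 ^ n' : ℕ) : ℝ) / ((b ^ M' : ℕ) : ℝ)) := by
    refine (Nat.cast_le.2 (Finset.card_le_card hsub)).trans ?_
    refine (Nat.cast_le.2 Finset.card_biUnion_le).trans ?_
    push_cast
    refine Finset.sum_le_sum fun q _ => ?_
    refine (Nat.cast_le.2 Finset.card_biUnion_le).trans ?_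
    push_cast
    refine Finset.sum_le_sum fun w _ => ?_
    have := fibre_card s (b ^ M') (2 ^ n') (q * h + w - δ) (by positivity) h2
    push_cast at this
    exact this
  have hQ : (Qs.card : ℝ) ≤ 4 * ((b:ℝ) ^ M / 2 ^ n) := by
    rw [hQs, Nat.card_Icc]
    have hr : (1:ℝ) ≤ (b:ℝ) ^ M / 2 ^ n := by
      rw [one_le_div (by positivity)]; exact_mod_cast h1
    have a1 : (((u + 1) * b ^ M / 2 ^ n : ℕ) : ℝ) ≤ (u + 1) * ((b:ℝ) ^ M / 2 ^ n) := by
      refine Nat.cast_div_le.trans (le_of_eq ?_)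
      push_cast; ring
    have a2 : (u:ℝ) * ((b:ℝ) ^ M / 2 ^ n) < ((u * b ^ M / 2 ^ n : ℕ) : ℝ) + 1 := by
      have := Nat.lt_mul_div_succ (u * b ^ M) (show 0 < 2 ^ n by positivity)
      rw [← mul_div_assoc, div_lt_iff₀ (by positivity), mul_comm]
      rw [mul_comm (2 ^ n)] at this
      have h' : ((u * b ^ M : ℕ) : ℝ) < (((u * b ^ M / 2 ^ n + 1) * 2 ^ n : ℕ) : ℝ) := by
        rw [Nat.cast_lt]; exact this
      push_cast at h'
      push_cast
      linarith
    have a3 : u * b ^ M / 2 ^ n ≤ (u + 1) * b ^ M / 2 ^ n := by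
      apply Nat.div_le_div_right; gcongr; omega
    rw [Nat.cast_sub (by omega)]
    push_cast at a1 a2 ⊢
    linarith
  refine hcard.trans ?_
  simp only [Finset.sum_const, nsmul_eq_mul]
  have e1 : (2:ℝ) ^ n' = 2 ^ n * 2 ^ (n' - n) := by rw [← pow_add]; congr 1; omega
  have e2 : (b:ℝ) ^ M' = (b:ℝ) ^ M * (b:ℝ) ^ (M' - M) := by rw [← pow_add]; congr 1; omega
  push_cast
  rw [e1, e2]
  calc (Qs.card : ℝ) * (Bad.card * (3 * (2 ^ n * 2 ^ (n' - n) / ((b:ℝ) ^ M * (b:ℝ) ^ (M' - M)))))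
      ≤ (4 * ((b:ℝ) ^ M / 2 ^ n)) *
        (Bad.card * (3 * (2 ^ n * 2 ^ (n' - n) / ((b:ℝ) ^ M * (b:ℝ) ^ (M' - M))))) := by gcongr
    _ = 12 * 2 ^ (n' - n) * Bad.card / (b:ℝ) ^ (M' - M) := by field_simp; ring

lemma tele2 (L : ℕ) : ∑ b ∈ Finset.Icc 2 (L + 2), (1:ℝ) / (b * (b - 1)) < 1 := by
  have : ∀ L : ℕ, ∑ b ∈ Finset.Icc 2 (L + 2), (1:ℝ) / (b * (b - 1)) = 1 - 1 / (L + 2) := by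
    intro L
    induction L with
    | zero => norm_num
    | succ L ih =>
      rw [show L + 1 + 2 = (L + 2) + 1 from rfl, Finset.sum_Icc_succ_top (by omega), ih]
      push_cast
      have h1 : (L:ℝ) + 2 ≠ 0 := by positivity
      have h2 : (L:ℝ) + 2 + 1 ≠ 0 := by positivity
      have h3 : (L:ℝ) + 2 + 1 - 1 ≠ 0 := by rw [add_sub_cancel_right]; exact h1
      have h4 : (L:ℝ) + 1 + 2 ≠ 0 := by positivity
      field_simp
      ring
  rw [this]
  have : (0:ℝ) < 1 / ((L:ℝ) + 2) := by positivity
  linarith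

lemma stage (n n' u L : ℕ) (M M' : ℕ → ℕ) (hn : n ≤ n')
    (hM : ∀ b ∈ Finset.Icc 2 (L + 2), M b ≤ M' b)
    (h1 : ∀ b ∈ Finset.Icc 2 (L + 2), 2 ^ n ≤ b ^ M b)
    (h2 : ∀ b ∈ Finset.Icc 2 (L + 2), b ^ M' b ≤ 2 ^ n') :
    ∃ v, u * 2 ^ (n' - n) ≤ v ∧ v < (u + 1) * 2 ^ (n' - n) ∧
      ∀ b ∈ Finset.Icc 2 (L + 2), ∀ δ ≤ 1,
        (v * b ^ M' b / 2 ^ n' + δ) % b ^ (M' b - M b) ∉ BadSet b (M' b - M b) := by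
  set s := Finset.Ico (u * 2 ^ (n' - n)) ((u + 1) * 2 ^ (n' - n)) with hs
  by_contra hcon
  push Not at hcon
  have hsub : s ⊆ (Finset.Icc 2 (L + 2)).biUnion fun b => (Finset.range 2).biUnion fun δ =>
      s.filter fun v => (v * b ^ M' b / 2 ^ n' + δ) % b ^ (M' b - M b) ∈ BadSet b (M' b - M b) := by
    intro v hv
    have hv' := Finset.mem_Ico.1 hv
    obtain ⟨b, hb, δ, hδ, hP⟩ := hcon v hv'.1 hv'.2
    simp only [Finset.mem_biUnion]
    exact ⟨b, hb, δ, Finset.mem_range.2 (by omega), Finset.mem_filter.2 ⟨hv, hP⟩⟩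
  have hcard : (s.card : ℝ) ≤ ∑ b ∈ Finset.Icc 2 (L + 2), 2 ^ (n' - n) * ((1:ℝ) / (b * (b - 1))) := by
    refine (Nat.cast_le.2 (Finset.card_le_card hsub)).trans ?_
    refine (Nat.cast_le.2 Finset.card_biUnion_le).trans ?_
    push_cast
    refine Finset.sum_le_sum fun b hb => ?_
    have hb2 : 2 ≤ b := (Finset.mem_Icc.1 hb).1
    have hb' : (2:ℝ) ≤ b := by exact_mod_cast hb2
    refine (Nat.cast_le.2 Finset.card_biUnion_le).trans ?_
    push_cast
    refine (Finset.sum_le_sum fun δ hδ => stage_card b (M b) (M' b) n n' u δ _ hb2 (hM b hb) hn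
      (h1 b hb) (h2 b hb) (by have := Finset.mem_range.1 hδ; omega)).trans ?_
    simp only [Finset.sum_const, Finset.card_range, nsmul_eq_mul]
    have hbad := BadSet_card b (M' b - M b) hb2
    have hbp : (0:ℝ) < (b:ℝ) ^ (M' b - M b) := by positivity
    have hq : (0:ℝ) < (b:ℝ) * (b - 1) := by apply mul_pos <;> linarith
    have hfin : 24 * ((BadSet b (M' b - M b)).card : ℝ) / (b:ℝ) ^ (M' b - M b) ≤ 1 / (b * (b - 1)) := by
      rw [div_le_div_iff₀ hbp hq]; linarith
    calc _ = 2 ^ (n' - n) * (24 * ((BadSet b (M' b - M b)).card : ℝ) / (b:ℝ) ^ (M' b - M b)) := by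
          push_cast; ring
      _ ≤ _ := by gcongr
  rw [← Finset.mul_sum, hs, Nat.card_Ico] at hcard
  have e : (u + 1) * 2 ^ (n' - n) - u * 2 ^ (n' - n) = 2 ^ (n' - n) := by
    rw [← Nat.sub_mul]; simp
  rw [e] at hcard
  have := tele2 L
  have hp : (0:ℝ) < 2 ^ (n' - n) := by positivity
  push_cast at hcard
  nlinarith


def mm (b i : ℕ) : ℕ := Nat.log b (2 ^ (4 ^ i))

lemma mm_le (b i : ℕ) : b ^ mm b i ≤ 2 ^ (4 ^ i) := Nat.pow_log_le_self b (by positivity)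

lemma mm_lt (b i : ℕ) (hb : 2 ≤ b) : 2 ^ (4 ^ i) < b ^ (mm b i + 1) :=
  Nat.lt_pow_succ_log_self (by omega) _

lemma mm_lower (b i : ℕ) (hb : 2 ≤ b) : 4 * mm b i ≤ mm b (i + 1) := by
  apply Nat.le_log_of_pow_le (by omega)
  have := Nat.pow_le_pow_left (mm_le b i) 4
  rw [← pow_mul, ← pow_mul, ← pow_succ] at this
  rwa [mul_comm]

lemma mm_upper (b i : ℕ) (hb : 2 ≤ b) : mm b (i + 1) ≤ 4 * mm b i + 3 := by
  apply Nat.le_of_lt_succ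
  apply Nat.log_lt_of_lt_pow (by positivity)
  have := Nat.pow_lt_pow_left (mm_lt b i hb) (show 4 ≠ 0 by norm_num)
  rw [← pow_mul, ← pow_mul, ← pow_succ] at this
  refine this.trans_eq ?_
  congr 1; omega

lemma mm_pos (b i : ℕ) (hb : 2 ≤ b) (hi : b ≤ i + 2) : 1 ≤ mm b i := by
  apply Nat.le_log_of_pow_le (by omega)
  rw [pow_one]
  have h1 : i + 1 < 2 ^ (i + 1) := Nat.lt_pow_self (by norm_num)
  have h2 : i < 4 ^ i := Nat.lt_pow_self (by norm_num)
  have h3 : 2 ^ (i + 1) ≤ 2 ^ (4 ^ i) := Nat.pow_le_pow_right (by norm_num) h2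
  omega

lemma floor_cell (b M' n' v : ℕ) (hb : 2 ≤ b) (x : ℝ) (h : b ^ M' ≤ 2 ^ n')
    (h1 : (v:ℝ) / 2 ^ n' ≤ x) (h2 : x ≤ ((v:ℝ) + 1) / 2 ^ n') :
    ∃ δ ≤ 1, ⌊(b:ℝ) ^ M' * x⌋₊ = v * b ^ M' / 2 ^ n' + δ := by
  have hR : (0:ℝ) < 2 ^ n' := by positivity
  have hP : (0:ℝ) < (b:ℝ) ^ M' := by positivity
  have hx : 0 ≤ x := le_trans (by positivity) h1
  set a := v * b ^ M' / 2 ^ n' with ha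
  have hPR : (b:ℝ) ^ M' ≤ 2 ^ n' := by exact_mod_cast h
  have l1 : a * 2 ^ n' ≤ v * b ^ M' := Nat.div_mul_le_self _ _
  have l2 : v * b ^ M' < (a + 1) * 2 ^ n' := by
    rw [mul_comm (a + 1)]; exact Nat.lt_mul_div_succ _ (by positivity)
  have l1r : (a:ℝ) * 2 ^ n' ≤ v * (b:ℝ) ^ M' := by exact_mod_cast l1
  have l2r : (v:ℝ) * (b:ℝ) ^ M' < (a + 1) * 2 ^ n' := by exact_mod_cast l2
  have c1 : a ≤ ⌊(b:ℝ) ^ M' * x⌋₊ := by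
    apply Nat.le_floor
    rw [div_le_iff₀ hR] at h1
    have : (a:ℝ) * 2 ^ n' ≤ ((b:ℝ) ^ M' * x) * 2 ^ n' := by nlinarith
    exact le_of_mul_le_mul_right this hR
  have c2 : ⌊(b:ℝ) ^ M' * x⌋₊ < a + 2 := by
    rw [Nat.floor_lt (by positivity)]
    rw [le_div_iff₀ hR] at h2
    have : ((b:ℝ) ^ M' * x) * 2 ^ n' < ((a + 2 : ℕ):ℝ) * 2 ^ n' := by
      push_cast
      nlinarith
    exact lt_of_mul_lt_mul_right this hR.le
  exact ⟨⌊(b:ℝ) ^ M' * x⌋₊ - a, by omega, by omega⟩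

lemma exists_x : ∃ x : ℝ, 0 ≤ x ∧ ∀ b, 2 ≤ b → ∀ i, b ≤ i + 2 →
    ⌊(b:ℝ) ^ mm b (i + 1) * x⌋₊ % b ^ (mm b (i + 1) - (mm b i + 1)) ∉
      BadSet b (mm b (i + 1) - (mm b i + 1)) := by
  have step : ∀ i u : ℕ, ∃ v, u * 2 ^ (4 ^ (i + 1) - 4 ^ i) ≤ v ∧
      v < (u + 1) * 2 ^ (4 ^ (i + 1) - 4 ^ i) ∧
      ∀ b ∈ Finset.Icc 2 (i + 2), ∀ δ ≤ 1,
        (v * b ^ mm b (i + 1) / 2 ^ (4 ^ (i + 1)) + δ) % b ^ (mm b (i + 1) - (mm b i + 1)) ∉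
          BadSet b (mm b (i + 1) - (mm b i + 1)) := by
    intro i u
    refine stage (4 ^ i) (4 ^ (i + 1)) u i (fun b => mm b i + 1) (fun b => mm b (i + 1))
      (Nat.pow_le_pow_right (by norm_num) (by omega)) ?_ ?_ ?_
    · intro b hb
      rw [Finset.mem_Icc] at hb
      have := mm_pos b i hb.1 hb.2
      have := mm_lower b i hb.1
      show mm b i + 1 ≤ mm b (i + 1)
      omega
    · intro b hb
      rw [Finset.mem_Icc] at hb
      exact (mm_lt b i hb.1).le
    · intro b hb
      exact mm_le b (i + 1)
  choose F hF1 hF2 hF3 using step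
  obtain ⟨v, hv⟩ : ∃ v : ℕ → ℕ, ∀ i, v (i + 1) = F i (v i) :=
    ⟨fun n => Nat.rec (motive := fun _ => ℕ) 0 (fun i u => F i u) n, fun i => rfl⟩
  let lo : ℕ → ℝ := fun i => (v i : ℝ) / 2 ^ (4 ^ i)
  let hi : ℕ → ℝ := fun i => ((v i : ℝ) + 1) / 2 ^ (4 ^ i)
  have hpow : ∀ i, (2:ℝ) ^ (4 ^ (i + 1)) = 2 ^ (4 ^ (i + 1) - 4 ^ i) * 2 ^ (4 ^ i) := by
    intro i
    rw [← pow_add]; congr 1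
    have : 4 ^ i ≤ 4 ^ (i + 1) := Nat.pow_le_pow_right (by norm_num) (by omega)
    omega
  have hlo : Monotone lo := by
    apply monotone_nat_of_le_succ
    intro i
    show (v i : ℝ) / 2 ^ (4 ^ i) ≤ (v (i + 1) : ℝ) / 2 ^ (4 ^ (i + 1))
    rw [hpow, div_le_div_iff₀ (by positivity) (by positivity)]
    have h := hF1 i (v i)
    rw [← hv] at h
    have h' : (v i : ℝ) * 2 ^ (4 ^ (i + 1) - 4 ^ i) ≤ v (i + 1) := by exact_mod_cast h
    have hp : (0:ℝ) < 2 ^ (4 ^ i) := by positivity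
    nlinarith
  have hhi : Antitone hi := by
    apply antitone_nat_of_succ_le
    intro i
    show ((v (i + 1) : ℝ) + 1) / 2 ^ (4 ^ (i + 1)) ≤ ((v i : ℝ) + 1) / 2 ^ (4 ^ i)
    rw [hpow, div_le_div_iff₀ (by positivity) (by positivity)]
    have h := hF2 i (v i)
    rw [← hv] at h
    have h' : (v (i + 1) : ℝ) + 1 ≤ ((v i : ℝ) + 1) * 2 ^ (4 ^ (i + 1) - 4 ^ i) := by
      exact_mod_cast h
    have hp : (0:ℝ) < 2 ^ (4 ^ i) := by positivity
    nlinarith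
  have hlh : ∀ i, lo i ≤ hi i := by
    intro i
    show (v i : ℝ) / 2 ^ (4 ^ i) ≤ ((v i : ℝ) + 1) / 2 ^ (4 ^ i)
    gcongr; linarith
  have hlh2 : ∀ i j, lo i ≤ hi j := fun i j =>
    (hlo (le_max_left i j)).trans ((hlh _).trans (hhi (le_max_right i j)))
  have hbdd : BddAbove (Set.range lo) := ⟨hi 0, by rintro _ ⟨i, rfl⟩; exact hlh2 i 0⟩
  have hx1 : ∀ i, lo i ≤ ⨆ i, lo i := fun i => le_ciSup hbdd i
  have hx2 : ∀ i, ⨆ i, lo i ≤ hi i := fun i => ciSup_le fun j => hlh2 j i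
  refine ⟨⨆ i, lo i, le_trans (by simp only [lo]; positivity) (hx1 0), ?_⟩
  intro b hb i hbi
  obtain ⟨δ, hδ, hfl⟩ := floor_cell b (mm b (i + 1)) (4 ^ (i + 1)) (v (i + 1)) hb _
    (mm_le b (i + 1)) (hx1 (i + 1)) (hx2 (i + 1))
  rw [hfl, hv]
  exact hF3 i (v i) b (Finset.mem_Icc.2 ⟨hb, hbi⟩) δ hδ

lemma floor_fract (B : ℕ) (hB : 0 < B) (y : ℝ) (hy : 0 ≤ y) :
    ⌊(B:ℝ) * Int.fract y⌋₊ = ⌊(B:ℝ) * y⌋₊ % B := by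
  have hfr : Int.fract y = y - ⌊y⌋₊ := by
    rw [Int.fract, ← natCast_floor_eq_intCast_floor hy]
  have hB' : (0:ℝ) < B := by exact_mod_cast hB
  have e : (B:ℝ) * y = (B:ℝ) * Int.fract y + ((B * ⌊y⌋₊ : ℕ) : ℝ) := by
    rw [hfr]; push_cast; ring
  have hlt : ⌊(B:ℝ) * Int.fract y⌋₊ < B := by
    rw [Nat.floor_lt (by have := Int.fract_nonneg y; positivity)]
    have := Int.fract_lt_one y
    nlinarith
  conv_rhs => rw [e]
  rw [Nat.floor_add_natCast (by have := Int.fract_nonneg y; positivity), Nat.add_mul_mod_self_left,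
    Nat.mod_eq_of_lt hlt]

lemma win_floor (b M M' j k : ℕ) (hb : 2 ≤ b) (hM : M ≤ M') (x : ℝ) (hx : 0 ≤ x)
    (hj : M + j + k ≤ M') :
    win b (M' - M) (⌊(b:ℝ) ^ M' * x⌋₊ % b ^ (M' - M)) j k =
      ⌊(b:ℝ) ^ k * Int.fract ((b:ℝ) ^ (M + j) * x)⌋₊ := by
  have hb0 : (0:ℝ) < b := by positivity
  have h1 := floor_fract (b ^ k) (by positivity) ((b:ℝ) ^ (M + j) * x) (by positivity)
  push_cast at h1
  rw [h1]
  unfold win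
  set g := M' - M - j - k with hg
  have e1 : b ^ (M' - M) = b ^ g * (b ^ k * b ^ j) := by
    rw [← pow_add, ← pow_add]; congr 1; omega
  rw [e1, Nat.mod_mul_right_div_self, Nat.mod_mul_right_mod]
  congr 1
  rw [← Nat.floor_div_natCast]
  congr 1
  have e2 : (b:ℝ) ^ M' = (b:ℝ) ^ g * ((b:ℝ) ^ k * (b:ℝ) ^ (M + j)) := by
    rw [← pow_add, ← pow_add]; congr 1; omega
  rw [e2]
  push_cast
  field_simp


noncomputable def dev (b : ℕ) (x α : ℝ) (M N : ℕ) : ℝ :=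
  ∑ j ∈ Finset.range N, ((if Int.fract ((b:ℝ) ^ (M + j) * x) < α then (1:ℝ) else 0) - α)

lemma dev_add (b : ℕ) (x α : ℝ) (M N L : ℕ) :
    dev b x α M (N + L) = dev b x α M N + dev b x α (M + N) L := by
  unfold dev
  rw [Finset.sum_range_add]
  simp only [add_assoc]

lemma dev_triv (b : ℕ) (x α : ℝ) (h0 : 0 ≤ α) (h1 : α ≤ 1) (M N : ℕ) :
    |dev b x α M N| ≤ N := by
  unfold dev
  refine (Finset.abs_sum_le_sum_abs _ _).trans ?_
  calc _ ≤ ∑ j ∈ Finset.range N, (1:ℝ) := by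
        apply Finset.sum_le_sum
        intro j _
        rw [abs_le]
        split_ifs <;> constructor <;> linarith
    _ = N := by simp

lemma stage_dev (b M M' : ℕ) (x α : ℝ) (hb : 2 ≤ b) (hM : M ≤ M') (hx : 0 ≤ x)
    (h0 : 0 ≤ α) (h1 : α ≤ 1)
    (hbad : ⌊(b:ℝ) ^ M' * x⌋₊ % b ^ (M' - M) ∉ BadSet b (M' - M))
    (N : ℕ) (hN : N + Nat.log b (M' - M) ≤ M' - M) :
    |dev b x α M N| ≤ 300 * b * Real.sqrt ((M' - M : ℕ) : ℝ) + b := by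
  set H := M' - M with hH
  set K := Nat.log b H with hK
  have hb0 : (0:ℝ) < b := by positivity
  have hbK : (0:ℝ) < (b:ℝ) ^ K := by positivity
  rcases h1.eq_or_lt with rfl | h1
  · have : dev b x 1 M N = 0 := by
      unfold dev
      apply Finset.sum_eq_zero
      intro j _
      rw [if_pos (Int.fract_lt_one _)]; ring
    rw [this, abs_zero]; positivity
  set w := ⌊(b:ℝ) ^ M' * x⌋₊ % b ^ H with hw
  have hwl : w < b ^ H := Nat.mod_lt _ (by positivity)
  set e := ⌊(b:ℝ) ^ K * α⌋₊ with he
  have hel : (e:ℝ) ≤ (b:ℝ) ^ K * α := Nat.floor_le (by positivity)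
  have heu : (b:ℝ) ^ K * α < e + 1 := Nat.lt_floor_add_one _
  have heK : e < b ^ K := by
    rw [he, Nat.floor_lt (by positivity)]
    push_cast
    nlinarith
  have g1 := good_dev b H w hb hwl hbad N hN e heK.le
  have g2 := good_dev b H w hb hwl hbad N hN (e + 1) heK
  rw [← hK] at g1 g2
  have hNb : (N:ℝ) ≤ b * (b:ℝ) ^ K := by
    have h2 : H < b ^ (K + 1) := Nat.lt_pow_succ_log_self (by omega) _
    have h3 : N ≤ b ^ (K + 1) := by omega
    rw [pow_succ'] at h3
    exact_mod_cast h3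
  have hq : (N:ℝ) / (b:ℝ) ^ K ≤ b := by rwa [div_le_iff₀ hbK]
  have hdev : dev b x α M N =
      ∑ j ∈ Finset.range N, (if Int.fract ((b:ℝ) ^ (M + j) * x) < α then (1:ℝ) else 0) - N * α := by
    unfold dev; rw [Finset.sum_sub_distrib]; simp
  have s1 : ∑ j ∈ Finset.range N, (if win b H w j K < e then (1:ℝ) else 0) ≤
      ∑ j ∈ Finset.range N, (if Int.fract ((b:ℝ) ^ (M + j) * x) < α then (1:ℝ) else 0) := by
    apply Finset.sum_le_sum
    intro j hj
    rw [Finset.mem_range] at hj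
    have hwf := win_floor b M M' j K hb hM x hx (by omega)
    rw [← hH, ← hw] at hwf
    by_cases hc : win b H w j K < e
    · have : Int.fract ((b:ℝ) ^ (M + j) * x) < α := by
        rw [hwf, Nat.floor_lt (by have := Int.fract_nonneg ((b:ℝ) ^ (M + j) * x); positivity)] at hc
        have := hc.trans_le hel
        exact lt_of_mul_lt_mul_left this hbK.le
      rw [if_pos hc, if_pos this]
    · rw [if_neg hc]; split_ifs <;> norm_num
  have s2 : ∑ j ∈ Finset.range N, (if Int.fract ((b:ℝ) ^ (M + j) * x) < α then (1:ℝ) else 0) ≤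
      ∑ j ∈ Finset.range N, (if win b H w j K < e + 1 then (1:ℝ) else 0) := by
    apply Finset.sum_le_sum
    intro j hj
    rw [Finset.mem_range] at hj
    have hwf := win_floor b M M' j K hb hM x hx (by omega)
    rw [← hH, ← hw] at hwf
    by_cases hc : Int.fract ((b:ℝ) ^ (M + j) * x) < α
    · have : win b H w j K < e + 1 := by
        rw [hwf, Nat.floor_lt (by have := Int.fract_nonneg ((b:ℝ) ^ (M + j) * x); positivity)]
        push_cast
        exact lt_trans (mul_lt_mul_of_pos_left hc hbK) heu
      rw [if_pos hc, if_pos this]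
    · rw [if_neg hc]; split_ifs <;> norm_num
  have t1 : (N:ℝ) * α - N * ((e:ℝ) / (b:ℝ) ^ K) ≤ b := by
    have : (N:ℝ) * α - N * ((e:ℝ) / (b:ℝ) ^ K) = N / (b:ℝ) ^ K * ((b:ℝ) ^ K * α - e) := by
      field_simp
    rw [this]
    have h3 : (0:ℝ) ≤ N / (b:ℝ) ^ K := by positivity
    nlinarith
  have t2 : (N:ℝ) * (((e + 1 : ℕ):ℝ) / (b:ℝ) ^ K) - N * α ≤ b := by
    have : (N:ℝ) * (((e + 1 : ℕ):ℝ) / (b:ℝ) ^ K) - N * α =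
        N / (b:ℝ) ^ K * (e + 1 - (b:ℝ) ^ K * α) := by
      push_cast
      field_simp
    rw [this]
    have h3 : (0:ℝ) ≤ N / (b:ℝ) ^ K := by positivity
    nlinarith
  rw [abs_le] at g1 g2
  rw [hdev, abs_le]
  constructor
  · linarith [g1.1]
  · linarith [g2.2]

lemma sq_le_four_two_pow (K : ℕ) : K ^ 2 ≤ 4 * 2 ^ K := by
  induction K with
  | zero => norm_num
  | succ n ih =>
    rcases Nat.lt_or_ge n 3 with h | h
    · interval_cases n <;> norm_num
    · rw [pow_succ 2 n]; nlinarith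

lemma stage_dev2 (b M M' : ℕ) (x α : ℝ) (hb : 2 ≤ b) (hM : M < M') (hx : 0 ≤ x)
    (h0 : 0 ≤ α) (h1 : α ≤ 1)
    (hbad : ⌊(b:ℝ) ^ M' * x⌋₊ % b ^ (M' - M) ∉ BadSet b (M' - M))
    (N : ℕ) (hN : N ≤ M' - M + 1) :
    |dev b x α M N| ≤ 303 * b * Real.sqrt ((M' - M : ℕ) : ℝ) := by
  have hmain := stage_dev b M M' x α hb hM.le hx h0 h1 hbad
  set H := M' - M with hH
  set K := Nat.log b H with hK
  have hKH : K ≤ H := Nat.log_le_self _ _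
  have hH1 : 1 ≤ H := by omega
  have hs1 : 1 ≤ Real.sqrt (H:ℝ) := by
    rw [Real.one_le_sqrt]; exact_mod_cast hH1
  have hK2 : (K:ℝ) ≤ 2 * Real.sqrt (H:ℝ) := by
    have a1 : K ^ 2 ≤ 4 * H := by
      have c1 := sq_le_four_two_pow K
      have c2 : 2 ^ K ≤ b ^ K := Nat.pow_le_pow_left hb K
      have c3 : b ^ K ≤ H := Nat.pow_log_le_self b (by omega)
      omega
    have a2 : (K:ℝ) ^ 2 ≤ 4 * H := by exact_mod_cast a1
    have a3 : Real.sqrt (H:ℝ) ^ 2 = H := Real.sq_sqrt (by positivity)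
    refine (abs_le_of_sq_le_sq' ?_ (by positivity)).2
    rw [mul_pow, a3]; linarith
  have hb2 : (2:ℝ) ≤ b := by exact_mod_cast hb
  obtain ⟨L, R, hL, hR, rfl⟩ : ∃ L R, L + K ≤ H ∧ R ≤ K + 1 ∧ N = L + R :=
    ⟨min N (H - K), N - min N (H - K), by omega, by omega, by omega⟩
  rw [dev_add]
  have e1 := hmain L hL
  have e2 := dev_triv b x α h0 h1 (M + L) R
  have e3 : (R:ℝ) ≤ K + 1 := by exact_mod_cast hR
  refine (abs_add_le _ _).trans ?_
  nlinarith

lemma dev_base (b : ℕ) (x α : ℝ) (hb : 2 ≤ b) (hx : 0 ≤ x) (h0 : 0 ≤ α) (h1 : α ≤ 1)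
    (hbad : ∀ i, b ≤ i + 2 →
      ⌊(b:ℝ) ^ mm b (i + 1) * x⌋₊ % b ^ (mm b (i + 1) - (mm b i + 1)) ∉
        BadSet b (mm b (i + 1) - (mm b i + 1))) (t : ℕ) :
    |dev b x α 0 (mm b (b - 2 + t) + 1)| ≤
      (mm b (b - 2) + 1 : ℕ) + 606 * b * Real.sqrt (mm b (b - 2 + t)) := by
  induction t with
  | zero =>
    refine (dev_triv b x α h0 h1 _ _).trans ?_
    simp only [add_zero]
    have : (0:ℝ) ≤ 606 * b * Real.sqrt (mm b (b - 2)) := by positivity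
    linarith
  | succ t ih =>
    set i := b - 2 + t with hi
    have hp := mm_pos b i hb (by omega)
    have hlow := mm_lower b i hb
    rw [show b - 2 + (t + 1) = i + 1 by omega]
    have hs := stage_dev2 b (mm b i + 1) (mm b (i + 1)) x α hb (by omega) hx h0 h1
      (hbad i (by omega)) (mm b (i + 1) - (mm b i + 1) + 1) le_rfl
    have e : mm b (i + 1) + 1 = (mm b i + 1) + (mm b (i + 1) - (mm b i + 1) + 1) := by omega
    rw [e, dev_add, zero_add]
    refine (abs_add_le _ _).trans ?_
    have q1 : Real.sqrt ((mm b (i + 1) - (mm b i + 1) : ℕ) : ℝ) ≤ Real.sqrt (mm b (i + 1)) := by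
      apply Real.sqrt_le_sqrt; exact_mod_cast Nat.sub_le _ _
    have q2 : 2 * Real.sqrt (mm b i) ≤ Real.sqrt (mm b (i + 1)) := by
      apply Real.le_sqrt_of_sq_le
      rw [mul_pow, Real.sq_sqrt (by positivity)]
      have : (4:ℝ) * mm b i ≤ mm b (i + 1) := by exact_mod_cast hlow
      linarith
    have hb0 : (0:ℝ) < b := by positivity
    nlinarith

lemma dev_all (b : ℕ) (x α : ℝ) (hb : 2 ≤ b) (hx : 0 ≤ x) (h0 : 0 ≤ α) (h1 : α ≤ 1)
    (hbad : ∀ i, b ≤ i + 2 →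
      ⌊(b:ℝ) ^ mm b (i + 1) * x⌋₊ % b ^ (mm b (i + 1) - (mm b i + 1)) ∉
        BadSet b (mm b (i + 1) - (mm b i + 1))) (N : ℕ) (hN : mm b (b - 2) + 1 ≤ N) :
    |dev b x α 0 N| ≤ (mm b (b - 2) + 1 : ℕ) + 1300 * b * Real.sqrt N := by
  have hgrow : ∀ t, t ≤ mm b (b - 2 + t) := by
    intro t
    induction t with
    | zero => omega
    | succ t ih =>
      have := mm_lower b (b - 2 + t) hb
      have := mm_pos b (b - 2 + t) hb (by omega)
      rw [← add_assoc]; omega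
  have hex : ∃ t, N ≤ mm b (b - 2 + (t + 1)) + 1 := ⟨N, by have := hgrow (N + 1); omega⟩
  obtain ⟨t, ht1, ht2⟩ : ∃ t, mm b (b - 2 + t) + 1 ≤ N ∧ N ≤ mm b (b - 2 + (t + 1)) + 1 := by
    refine ⟨Nat.find hex, ?_, Nat.find_spec hex⟩
    rcases hz : Nat.find hex with _ | k
    · simpa using hN
    · have := Nat.find_min hex (m := k) (by omega)
      omega
  have hbase := dev_base b x α hb hx h0 h1 hbad t
  set i := b - 2 + t with hi
  rw [show b - 2 + (t + 1) = i + 1 by omega] at ht2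
  have hp := mm_pos b i hb (by omega)
  have hlow := mm_lower b i hb
  have hup := mm_upper b i hb
  have hs := stage_dev2 b (mm b i + 1) (mm b (i + 1)) x α hb (by omega) hx h0 h1
      (hbad i (by omega)) (N - (mm b i + 1)) (by omega)
  have e : N = (mm b i + 1) + (N - (mm b i + 1)) := by omega
  have hsum : |dev b x α 0 N| ≤ |dev b x α 0 (mm b i + 1)| +
      |dev b x α (mm b i + 1) (N - (mm b i + 1))| := by
    conv_lhs => rw [e, dev_add, zero_add]
    exact abs_add_le _ _
  have q1 : Real.sqrt (mm b i) ≤ Real.sqrt N := by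
    apply Real.sqrt_le_sqrt; exact_mod_cast (by omega : mm b i ≤ N)
  have q2 : Real.sqrt ((mm b (i + 1) - (mm b i + 1) : ℕ) : ℝ) ≤ 2.25 * Real.sqrt N := by
    apply Real.sqrt_le_iff.2
    refine ⟨by positivity, ?_⟩
    rw [mul_pow, Real.sq_sqrt (by positivity)]
    have : ((mm b (i + 1) - (mm b i + 1) : ℕ) : ℝ) ≤ 5 * N := by
      exact_mod_cast (by omega : mm b (i + 1) - (mm b i + 1) ≤ 5 * N)
    have hN0 : (0:ℝ) ≤ N := by positivity
    nlinarith
  have hb0 : (0:ℝ) < b := by positivity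
  have r1 : b * Real.sqrt (mm b i) ≤ b * Real.sqrt N := mul_le_mul_of_nonneg_left q1 hb0.le
  have r2 : b * Real.sqrt ((mm b (i + 1) - (mm b i + 1) : ℕ) : ℝ) ≤ b * (2.25 * Real.sqrt N) :=
    mul_le_mul_of_nonneg_left q2 hb0.le
  have r3 : 0 ≤ b * Real.sqrt N := by positivity
  nlinarith

lemma disc_le_of_dev (b : ℕ) (x E : ℝ) (N : ℕ) (hN : 0 < N)
    (h : ∀ α, 0 ≤ α → α ≤ 1 → |dev b x α 0 N| ≤ E) :
    disc N (fun j => Int.fract ((b:ℝ) ^ j * x)) ≤ 2 * E / N := by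
  unfold disc
  haveI : Nonempty {p : ℝ × ℝ // 0 ≤ p.1 ∧ p.1 < p.2 ∧ p.2 ≤ 1} :=
    ⟨⟨(0, 1), by norm_num⟩⟩
  apply ciSup_le
  rintro ⟨⟨α, β⟩, ha, hab, hb⟩
  simp only at ha hab hb ⊢
  have hN0 : (0:ℝ) < N := by exact_mod_cast hN
  have key : (((Finset.range N).filter fun j => α ≤ Int.fract ((b:ℝ) ^ j * x) ∧
      Int.fract ((b:ℝ) ^ j * x) < β).card : ℝ) - N * (β - α) =
      dev b x β 0 N - dev b x α 0 N := by
    unfold dev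
    rw [← Finset.sum_sub_distrib, card_real,
      show (N:ℝ) * (β - α) = ∑ j ∈ Finset.range N, (β - α) by simp [mul_sub], ← Finset.sum_sub_distrib]
    apply Finset.sum_congr rfl
    intro j _
    rw [zero_add]
    by_cases c1 : Int.fract ((b:ℝ) ^ j * x) < α
    · have c2 : Int.fract ((b:ℝ) ^ j * x) < β := c1.trans hab
      rw [if_neg (fun hh => absurd hh.1 (not_le.2 c1)), if_pos c1, if_pos c2]; ring
    · by_cases c2 : Int.fract ((b:ℝ) ^ j * x) < β
      · rw [if_pos ⟨not_lt.1 c1, c2⟩, if_neg c1, if_pos c2]; ring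
      · rw [if_neg (fun hh => c2 hh.2), if_neg c1, if_neg c2]; ring
  have k1 := h β (ha.trans hab.le) hb
  have k2 := h α ha (hab.le.trans hb)
  have k3 := (abs_sub (dev b x β 0 N) (dev b x α 0 N))
  rw [← key] at k3
  rw [le_div_iff₀ hN0, ← abs_of_pos hN0, ← abs_mul, sub_mul, abs_of_pos hN0,
    div_mul_cancel₀ _ hN0.ne', mul_comm (β - α)]
  linarith

lemma disc_bound (b : ℕ) (x : ℝ) (hb : 2 ≤ b) (hx : 0 ≤ x)
    (hbad : ∀ i, b ≤ i + 2 →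
      ⌊(b:ℝ) ^ mm b (i + 1) * x⌋₊ % b ^ (mm b (i + 1) - (mm b i + 1)) ∉
        BadSet b (mm b (i + 1) - (mm b i + 1))) :
    ∃ N₀ : ℕ, ∀ N : ℕ, N₀ ≤ N →
      disc N (fun j => Int.fract ((b : ℝ) ^ j * x)) ≤ 3433 * b / Real.sqrt N := by
  set C := mm b (b - 2) + 1 with hC
  refine ⟨C ^ 2, fun N hN => ?_⟩
  have hC1 : 1 ≤ C := by omega
  have hCN : C ≤ N := by nlinarith
  have hN0 : 0 < N := by omega
  have h1 := disc_le_of_dev b x ((C:ℕ) + 1300 * b * Real.sqrt N) N hN0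
    (fun α h0 h1 => dev_all b x α hb hx h0 h1 hbad N hCN)
  refine h1.trans ?_
  have hNr : (0:ℝ) < N := by exact_mod_cast hN0
  have hs : 0 < Real.sqrt N := Real.sqrt_pos.2 hNr
  have hCs : (C:ℝ) ≤ Real.sqrt N := by
    apply Real.le_sqrt_of_sq_le; exact_mod_cast hN
  have hss : Real.sqrt N * Real.sqrt N = N := Real.mul_self_sqrt hNr.le
  have hb2 : (2:ℝ) ≤ b := by exact_mod_cast hb
  rw [div_le_div_iff₀ hNr hs]
  have : 2 * ((C:ℝ) + 1300 * b * Real.sqrt N) ≤ 3433 * b * Real.sqrt N := by nlinarith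
  calc _ ≤ (3433 * b * Real.sqrt N) * Real.sqrt N := mul_le_mul_of_nonneg_right this hs.le
    _ = _ := by rw [mul_assoc, hss]

theorem stmt0 :
    ∃ x : ℝ, ∀ b : ℕ, 2 ≤ b →
      (Filter.Tendsto (fun N => disc N (fun j => Int.fract ((b : ℝ) ^ j * x)))
        Filter.atTop (nhds 0)) ∧
      ∃ N₀ : ℕ, ∀ N : ℕ, N₀ ≤ N →
        disc N (fun j => Int.fract ((b : ℝ) ^ j * x)) ≤ 3433 * b / Real.sqrt N := by
  obtain ⟨x, hx, hbad⟩ := exists_x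
  refine ⟨x, fun b hb => ?_⟩
  have hB := disc_bound b x hb hx (hbad b hb)
  refine ⟨?_, hB⟩
  obtain ⟨N₀, hN₀⟩ := hB
  have hlim : Filter.Tendsto (fun N : ℕ => 3433 * (b:ℝ) / Real.sqrt N) Filter.atTop (nhds 0) :=
    Filter.Tendsto.div_atTop tendsto_const_nhds
      (Real.tendsto_sqrt_atTop.comp tendsto_natCast_atTop_atTop)
  refine squeeze_zero' (Filter.Eventually.of_forall fun N => ?_) ?_ hlim
  · exact Real.iSup_nonneg fun p => abs_nonneg _
  · exact Filter.eventually_atTop.2 ⟨N₀, hN₀⟩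
end

section
/- Let b ≥ 2 be an integer, let h and N be positive integers with N ≥ h, and let ε > 0 be real. Then for all integers M ≥ 0 and a with 0 ≤ a < b^h, for any subinterval A of [0,1] and any positive integer j_0, μ({x ∈ A : F(M + j_0, N, a·b^{−h}, (a+1)·b^{−h}, ({b^j x})_{j≥0}) > ε·√(hN)}) ≤ 2·μ(A)·h·exp(−ε² / (2·b^{−h}(1 − b^{−h}) + (2/3)·ε·⌊N/h⌋^{−1/2})) + 2·b^{−j_0}. -/
open scoped Classical

/-- `F M N α₁ α₂ x = |#{j : M ≤ j < M+N, α₁ ≤ x_j < α₂} − (α₂ − α₁)·N|`. -/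
noncomputable def F (M N : ℕ) (α₁ α₂ : ℝ) (x : ℕ → ℝ) : ℝ :=
  |(((Finset.Ico M (M + N)).filter fun j => α₁ ≤ x j ∧ x j < α₂).card : ℝ) -
    (α₂ - α₁) * N|

/-- The sequence `({b^j x})_{j ≥ 0}` of fractional parts. -/
noncomputable def bseq (b : ℕ) (x : ℝ) : ℕ → ℝ := fun j => Int.fract ((b : ℝ) ^ j * x)

open MeasureTheory

lemma exp_aux (y : ℝ) : 0 ≤ (3 + 2*y + y^2/2) - (3 - y) * Real.exp y := by
  set f : ℝ → ℝ := fun y => (3 + 2*y + y^2/2) * Real.exp (-y) + y - 3 with hf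
  have hd : ∀ y, HasDerivAt f (1 - (1 + y + y^2/2) * Real.exp (-y)) y := by
    intro y
    have h1 : HasDerivAt (fun y : ℝ => 3 + 2*y + y^2/2) (2 + y) y := by
      have := (((hasDerivAt_id y).const_mul 2).const_add 3).add (((hasDerivAt_id y).pow 2).div_const 2)
      exact this.congr_deriv (by simp)
    have h2 : HasDerivAt (fun y : ℝ => Real.exp (-y)) (-Real.exp (-y)) y := by
      have := (hasDerivAt_id y).neg.exp
      exact this.congr_deriv (by simp)
    have := ((h1.mul h2).add (hasDerivAt_id y)).sub_const 3
    exact this.congr_deriv (by simp; ring)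
  set g : ℝ → ℝ := fun y => 1 - (1 + y + y^2/2) * Real.exp (-y) with hg
  have hgd : ∀ y, HasDerivAt g (y^2/2 * Real.exp (-y)) y := by
    intro y
    have h1 : HasDerivAt (fun y : ℝ => 1 + y + y^2/2) (1 + y) y := by
      have := ((hasDerivAt_id y).const_add 1).add (((hasDerivAt_id y).pow 2).div_const 2)
      exact this.congr_deriv (by simp)
    have h2 : HasDerivAt (fun y : ℝ => Real.exp (-y)) (-Real.exp (-y)) y := by
      have := (hasDerivAt_id y).neg.exp
      exact this.congr_deriv (by simp)
    have := (h1.mul h2).const_sub 1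
    exact this.congr_deriv (by simp; ring)
  have hgm : Monotone g := monotone_of_deriv_nonneg (fun y => (hgd y).differentiableAt)
    (fun y => by rw [(hgd y).deriv]; positivity)
  have g0 : g 0 = 0 := by simp [hg]
  have f0 : f 0 = 0 := by simp [hf]
  have hfc : Continuous f := by fun_prop
  have key : 0 ≤ f y := by
    rcases le_total 0 y with h | h
    · have : MonotoneOn f (Set.Ici 0) := monotoneOn_of_deriv_nonneg (convex_Ici 0) hfc.continuousOn
        (fun y _ => (hd y).differentiableAt.differentiableWithinAt)
        (fun y hy => by
          rw [(hd y).deriv]; simp at hy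
          have := hgm hy.le; rw [g0] at this; exact this)
      have := this (Set.mem_Ici.2 le_rfl) (Set.mem_Ici.2 h) h
      rwa [f0] at this
    · have : AntitoneOn f (Set.Iic 0) := antitoneOn_of_deriv_nonpos (convex_Iic 0) hfc.continuousOn
        (fun y _ => (hd y).differentiableAt.differentiableWithinAt)
        (fun y hy => by
          rw [(hd y).deriv]; simp at hy
          have := hgm hy.le; rw [g0] at this; exact this)
      have := this (Set.mem_Iic.2 h) (Set.mem_Iic.2 le_rfl) h
      rwa [f0] at this
  have : (3 + 2*y + y^2/2) - (3 - y) * Real.exp y = f y * Real.exp y := by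
    simp only [hf]
    have : Real.exp (-y) * Real.exp y = 1 := by rw [← Real.exp_add]; simp
    linear_combination (-(3 + 2*y + y^2/2)) * this
  rw [this]; positivity

lemma exp_bd (y l : ℝ) (hl : l < 3) (hy : y ≤ l) :
    Real.exp y ≤ 1 + y + y^2 / (2 * (1 - l/3)) := by
  have h := exp_aux y
  have h3 : 0 < 3 - y := by linarith
  have : Real.exp y ≤ 1 + y + y^2 / (2 * (1 - y/3)) := by
    have e : 1 + y + y^2 / (2 * (1 - y/3)) = (3 + 2*y + y^2/2) / (3 - y) := by
      have : 1 - y/3 = (3-y)/3 := by ring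
      rw [this]; field_simp; ring
    rw [e, le_div_iff₀ h3]; linarith
  refine this.trans ?_
  gcongr
  linarith

/-- moment generating function bound -/
lemma mgf_bd (p θ l : ℝ) (hp : 0 ≤ p) (hp1 : p ≤ 1) (hl : l < 3) (hθ : |θ| ≤ l) :
    (1 - p) * Real.exp (θ * (-p)) + p * Real.exp (θ * (1 - p)) ≤
      Real.exp (p * (1 - p) * (θ^2 / (2 * (1 - l/3)))) := by
  have h1 : θ * (-p) ≤ l := by
    refine le_trans (le_abs_self _) ?_
    rw [abs_mul, abs_neg, abs_of_nonneg hp]; nlinarith [abs_nonneg θ]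
  have h2 : θ * (1-p) ≤ l := by
    refine le_trans (le_abs_self _) ?_
    rw [abs_mul, abs_of_nonneg (sub_nonneg.2 hp1)]; nlinarith [abs_nonneg θ]
  have e1 := mul_le_mul_of_nonneg_left (exp_bd _ l hl h1) (sub_nonneg.2 hp1)
  have e2 := mul_le_mul_of_nonneg_left (exp_bd _ l hl h2) hp
  have e3 := Real.add_one_le_exp (p * (1 - p) * (θ^2 / (2 * (1 - l/3))))
  refine le_trans (add_le_add e1 e2) (le_trans (le_of_eq ?_) e3)
  ring

lemma sum_split_s3 (h : ℕ) (z : ℕ → ℝ) (q : ℕ) :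
    ∑ j ∈ Finset.range (h*q), z j = ∑ i ∈ Finset.range h, ∑ k ∈ Finset.range q, z (i + h*k) := by
  induction q with
  | zero => simp
  | succ q ih =>
    rw [Nat.mul_succ, Finset.sum_range_add, ih, ← Finset.sum_add_distrib]
    refine Finset.sum_congr rfl fun i _ => ?_
    rw [Finset.sum_range_succ, add_comm i (h*q)]

lemma sum_split' (h N : ℕ) (hh : 1 ≤ h) (z : ℕ → ℝ) :
    ∑ j ∈ Finset.range N, z j = ∑ i ∈ Finset.range h,
      ∑ k ∈ Finset.range (N/h + if i < N % h then 1 else 0), z (i + h*k) := by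
  conv_lhs => rw [← Nat.div_add_mod N h]
  rw [Finset.sum_range_add, sum_split_s3]
  have hr : N % h ≤ h := (Nat.mod_lt _ hh).le
  have : ∑ x ∈ Finset.range (N % h), z (h * (N/h) + x) =
      ∑ i ∈ Finset.range h, if i < N % h then z (i + h * (N/h)) else 0 := by
    rw [← Finset.sum_filter]
    refine Finset.sum_congr ?_ fun i _ => by rw [add_comm]
    ext i; simp; omega
  rw [this, ← Finset.sum_add_distrib]
  refine Finset.sum_congr rfl fun i _ => ?_
  split_ifs
  · rw [Finset.sum_range_succ]
  · simp

lemma per_scale (H : ℝ → ℝ) (hH : Function.Periodic H 1) (m : ℕ) (hm : 1 ≤ m)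
    (hi : ∀ a b, IntervalIntegrable H volume a b) :
    ∫ x in (0:ℝ)..1, H (m * x) = ∫ x in (0:ℝ)..1, H x := by
  have hm' : (m:ℝ) ≠ 0 := by positivity
  rw [intervalIntegral.integral_comp_mul_left _ hm']
  have := hH.intervalIntegral_add_zsmul_eq m 0 hi
  simp at this
  simp [this]
  field_simp

lemma per_scale_I (H : ℝ → ℝ) (hH : Function.Periodic H 1) (m a : ℕ) (hm : 1 ≤ m) :
    ∫ x in ((a:ℝ)/m)..((a+1:ℝ)/m), H (m * x) = (m:ℝ)⁻¹ * ∫ x in (0:ℝ)..1, H x := by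
  have hm' : (m:ℝ) ≠ 0 := by positivity
  rw [intervalIntegral.integral_comp_mul_left _ hm', mul_div_cancel₀ _ hm', mul_div_cancel₀ _ hm',
    hH.intervalIntegral_add_eq a 0]
  simp

noncomputable def Zf (B a : ℕ) (x : ℝ) : ℝ :=
  (if (a:ℝ)/B ≤ Int.fract x ∧ Int.fract x < ((a:ℝ)+1)/B then 1 else 0) - (B:ℝ)⁻¹

lemma Zf_meas (B a : ℕ) : Measurable (Zf B a) := by
  unfold Zf
  refine Measurable.sub (Measurable.ite ?_ measurable_const measurable_const) measurable_const
  exact (measurableSet_le measurable_const measurable_fract).inter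
    (measurableSet_lt measurable_fract measurable_const)

lemma Zf_per (B a : ℕ) (x : ℝ) (m : ℕ) : Zf B a (x + m) = Zf B a x := by
  simp [Zf]

lemma Zf_abs (B a : ℕ) (hB : 1 ≤ B) (x : ℝ) : |Zf B a x| ≤ 1 := by
  have h1 : (B:ℝ)⁻¹ ≤ 1 := inv_le_one_of_one_le₀ (by exact_mod_cast hB)
  have h0 : 0 ≤ (B:ℝ)⁻¹ := by positivity
  unfold Zf
  rw [abs_le]
  split_ifs <;> constructor <;> linarith

noncomputable def Sf (B a n : ℕ) (x : ℝ) : ℝ := ∑ k ∈ Finset.range n, Zf B a ((B:ℝ)^k * x)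

lemma Sf_meas (B a n : ℕ) : Measurable (Sf B a n) := by
  unfold Sf
  exact Finset.measurable_sum _ fun k _ => (Zf_meas B a).comp (measurable_const_mul _)

lemma Sf_abs (B a n : ℕ) (hB : 1 ≤ B) (x : ℝ) : |Sf B a n x| ≤ n := by
  unfold Sf
  refine (Finset.abs_sum_le_sum_abs _ _).trans ?_
  refine (Finset.sum_le_sum fun k _ => Zf_abs B a hB _).trans ?_
  simp

lemma Sf_per (B a n : ℕ) : Function.Periodic (Sf B a n) 1 := by
  intro x
  unfold Sf
  refine Finset.sum_congr rfl fun k _ => ?_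
  have := Zf_per B a ((B:ℝ)^k * x) (B^k)
  rw [← this]; push_cast; ring_nf

lemma Sf_succ (B a n : ℕ) (x : ℝ) : Sf B a (n+1) x = Zf B a x + Sf B a n (B * x) := by
  unfold Sf
  rw [Finset.sum_range_succ', add_comm]
  congr 1
  · simp
  · refine Finset.sum_congr rfl fun k _ => ?_
    rw [pow_succ, mul_assoc]

lemma ii_of_bd (f : ℝ → ℝ) (hf : Measurable f) (C : ℝ) (hC : ∀ x, |f x| ≤ C) (a b : ℝ) :
    IntervalIntegrable f volume a b := by
  refine IntervalIntegrable.mono_fun (intervalIntegrable_const (c := C)) hf.aestronglyMeasurable ?_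
  refine Filter.Eventually.of_forall fun x => ?_
  simp only [Real.norm_eq_abs]
  exact (hC x).trans (le_abs_self _)

lemma G_ii (B a n : ℕ) (hB : 1 ≤ B) (θ m : ℝ) (c d : ℝ) :
    IntervalIntegrable (fun x => Real.exp (θ * Sf B a n (m * x))) volume c d := by
  refine ii_of_bd _ ?_ (Real.exp (|θ| * n)) ?_ c d
  · exact Real.measurable_exp.comp (((Sf_meas B a n).comp (measurable_const_mul m)).const_mul θ)
  · intro x
    rw [abs_of_pos (Real.exp_pos _)]
    refine Real.exp_le_exp.2 ((le_abs_self _).trans ?_)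
    rw [abs_mul]
    exact mul_le_mul_of_nonneg_left (Sf_abs B a n hB _) (abs_nonneg _)

lemma G_int (B a n : ℕ) (ha : a < B) (θ : ℝ) :
    ∫ x in (0:ℝ)..1, Real.exp (θ * Sf B a n x) =
      ((1 - (B:ℝ)⁻¹) * Real.exp (θ * (-(B:ℝ)⁻¹)) + (B:ℝ)⁻¹ * Real.exp (θ * (1 - (B:ℝ)⁻¹)))^n := by
  have hB : 1 ≤ B := by omega
  have hBp : (0:ℝ) < B := by exact_mod_cast hB
  induction n with
  | zero => simp [Sf]
  | succ n ih =>
    have h0a : (0:ℝ) ≤ a / B := by positivity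
    have hab : (a:ℝ)/B ≤ (a+1)/B := by gcongr; linarith
    have hb1 : ((a:ℝ)+1)/B ≤ 1 := by
      rw [div_le_one hBp]; exact_mod_cast ha
    set H : ℝ → ℝ := fun x => Real.exp (θ * Sf B a n x) with hH
    have hHp : Function.Periodic H 1 := fun x => by simp only [hH]; rw [Sf_per]
    have hHi : ∀ c d, IntervalIntegrable H volume c d := fun c d => by
      simpa using G_ii B a n hB θ 1 c d
    have hHBi : ∀ c d, IntervalIntegrable (fun x => H (B * x)) volume c d := fun c d =>
      G_ii B a n hB θ B c d
    have hKi : ∀ c d, IntervalIntegrable (fun x => Real.exp (θ * Sf B a (n+1) x)) volume c d :=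
      fun c d => by simpa using G_ii B a (n+1) hB θ 1 c d
    have e1 := per_scale H hHp B hB hHi
    have e2 := per_scale_I H hHp B a hB
    have i1 : ∫ x in (0:ℝ)..(a/B), Real.exp (θ * Sf B a (n+1) x) =
        Real.exp (θ * (-(B:ℝ)⁻¹)) * ∫ x in (0:ℝ)..(a/B), H (B * x) := by
      rw [← intervalIntegral.integral_const_mul]
      refine intervalIntegral.integral_congr_uIoo fun x hx => ?_
      rw [Set.uIoo_of_le h0a] at hx
      have hf : Int.fract x = x := Int.fract_eq_self.2 ⟨hx.1.le, by linarith [hx.2]⟩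
      have : Zf B a x = -(B:ℝ)⁻¹ := by
        unfold Zf; rw [hf, if_neg (by intro h; linarith [hx.2, h.1])]; ring
      simp only [hH, Sf_succ, this]; rw [mul_add, Real.exp_add]
    have i2 : ∫ x in ((a:ℝ)/B)..((a+1:ℝ)/B), Real.exp (θ * Sf B a (n+1) x) =
        Real.exp (θ * (1-(B:ℝ)⁻¹)) * ∫ x in ((a:ℝ)/B)..((a+1:ℝ)/B), H (B * x) := by
      rw [← intervalIntegral.integral_const_mul]
      refine intervalIntegral.integral_congr_uIoo fun x hx => ?_
      rw [Set.uIoo_of_le hab] at hx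
      have hf : Int.fract x = x := Int.fract_eq_self.2 ⟨by linarith [hx.1], by linarith [hx.2]⟩
      have : Zf B a x = 1-(B:ℝ)⁻¹ := by
        unfold Zf; rw [hf, if_pos ⟨hx.1.le, hx.2⟩]
      simp only [hH, Sf_succ, this]; rw [mul_add, Real.exp_add]
    have i3 : ∫ x in ((a+1:ℝ)/B)..1, Real.exp (θ * Sf B a (n+1) x) =
        Real.exp (θ * (-(B:ℝ)⁻¹)) * ∫ x in ((a+1:ℝ)/B)..1, H (B * x) := by
      rw [← intervalIntegral.integral_const_mul]
      refine intervalIntegral.integral_congr_uIoo fun x hx => ?_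
      rw [Set.uIoo_of_le hb1] at hx
      have hf : Int.fract x = x := Int.fract_eq_self.2 ⟨by linarith [hx.1], hx.2⟩
      have : Zf B a x = -(B:ℝ)⁻¹ := by
        unfold Zf; rw [hf, if_neg (by intro h; linarith [hx.1, h.2])]; ring
      simp only [hH, Sf_succ, this]; rw [mul_add, Real.exp_add]
    have s1 := intervalIntegral.integral_add_adjacent_intervals (hKi 0 (a/B)) (hKi (a/B) ((a+1)/B))
    have s2 := intervalIntegral.integral_add_adjacent_intervals (hKi 0 ((a+1)/B)) (hKi ((a+1)/B) 1)
    have t1 := intervalIntegral.integral_add_adjacent_intervals (hHBi 0 (a/B)) (hHBi (a/B) ((a+1)/B))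
    have t2 := intervalIntegral.integral_add_adjacent_intervals (hHBi 0 ((a+1)/B)) (hHBi ((a+1)/B) 1)
    rw [ih] at e1 e2
    rw [← s2, ← s1, i1, i2, i3, pow_succ]
    rw [e2] at t1 ⊢
    rw [e1] at t2
    linear_combination Real.exp (θ * (-(B:ℝ)⁻¹)) * (t1 + t2)

/-- Bernstein exponential moment estimate. -/
lemma bern (B a n m : ℕ) (hB2 : 2 ≤ B) (ha : a < B) (hn : 1 ≤ n) (hm : 1 ≤ m) (t s : ℝ) (ht : 0 < t)
    (hs : |s| = 1) (L : ℝ)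
    (hL : L = t / (n * ((B:ℝ)⁻¹ * (1 - (B:ℝ)⁻¹)) + t/3)) :
    ∫ x in (0:ℝ)..1, Real.exp (L * (s * Sf B a n (m * x) - t)) ≤
      Real.exp (-t^2 / (2 * (n * ((B:ℝ)⁻¹ * (1 - (B:ℝ)⁻¹)) + t/3))) := by
  have hB : 1 ≤ B := by omega
  have hBp : (0:ℝ) < B := by exact_mod_cast hB
  have hp0 : 0 < (B:ℝ)⁻¹ := by positivity
  have hp1 : (B:ℝ)⁻¹ < 1 := inv_lt_one_of_one_lt₀ (by exact_mod_cast hB2)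
  set p := (B:ℝ)⁻¹ with hp
  have hnp : (0:ℝ) < n := by exact_mod_cast hn
  have hv : 0 < n * (p * (1 - p)) := mul_pos hnp (mul_pos hp0 (by linarith))
  set v := n * (p * (1 - p)) with hvd
  have hD : 0 < v + t/3 := by positivity
  have hL0 : 0 < L := by rw [hL]; positivity
  have hL3 : L < 3 := by rw [hL, div_lt_iff₀ hD]; linarith
  have hper : Function.Periodic (fun x => Real.exp ((L*s) * Sf B a n x)) 1 := fun x => by
    simp only; rw [Sf_per]
  have e := per_scale _ hper m hm (fun c d => by simpa using G_ii B a n hB (L*s) 1 c d)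
  rw [G_int B a n ha] at e
  have e' : ∫ x in (0:ℝ)..1, Real.exp (L * (s * Sf B a n (m * x) - t)) =
      Real.exp (-(L*t)) * ∫ x in (0:ℝ)..1, Real.exp ((L*s) * Sf B a n (m * x)) := by
    rw [← intervalIntegral.integral_const_mul]
    congr 1; ext x; rw [← Real.exp_add]; congr 1; ring
  rw [e', e]
  have hb := mgf_bd p (L*s) L hp0.le hp1.le hL3 (by rw [abs_mul, hs, abs_of_pos hL0, mul_one])
  have hpow := pow_le_pow_left₀ (by
    have := Real.exp_pos (L*s*(-p)); have := Real.exp_pos (L*s*(1-p))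
    have : 0 < 1 - p := by linarith
    positivity) hb n
  rw [← Real.exp_nat_mul] at hpow
  refine (mul_le_mul_of_nonneg_left hpow (Real.exp_pos _).le).trans ?_
  rw [← Real.exp_add]
  refine Real.exp_le_exp.2 (le_of_eq ?_)
  have hs2 : s^2 = 1 := by rw [← sq_abs, hs]; norm_num
  have h1 : 1 - L/3 = v / (v + t/3) := by rw [hL]; field_simp; ring
  have h2 : n * (p * (1-p) * ((L*s)^2 / (2 * (1 - L/3)))) = L * t / 2 := by
    rw [h1, mul_pow, hs2]
    have : n * (p * (1-p) * (L^2 * 1 / (2 * (v / (v + t/3))))) = v * (L^2 / (2 * (v / (v + t/3)))) := by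
      rw [hvd]; ring
    rw [this, hL]
    field_simp
  rw [h2, hL]
  field_simp
  ring

lemma F_eq (b h N a K : ℕ) (hh : 1 ≤ h) (x : ℝ) :
    F K N ((a : ℝ) / (b : ℝ) ^ h) (((a : ℝ) + 1) / (b : ℝ) ^ h) (bseq b x) =
      |∑ j ∈ Finset.range N, Zf (b^h) a ((b:ℝ)^(K+j) * x)| := by
  unfold F Zf bseq
  congr 1
  rw [Finset.sum_sub_distrib, ← Finset.sum_boole, Finset.sum_Ico_eq_sum_range]
  simp only [Nat.cast_pow, add_tsub_cancel_left, Finset.sum_const, Finset.card_range, nsmul_eq_mul]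
  ring_nf

lemma F_eq' (b h N a K : ℕ) (hh : 1 ≤ h) (x : ℝ) :
    F K N ((a : ℝ) / (b : ℝ) ^ h) (((a : ℝ) + 1) / (b : ℝ) ^ h) (bseq b x) =
      |∑ i ∈ Finset.range h, Sf (b^h) a (N/h + if i < N % h then 1 else 0)
        ((b^(K+i) : ℕ) * x)| := by
  rw [F_eq b h N a K hh, sum_split' h N hh]
  congr 1
  refine Finset.sum_congr rfl fun i _ => ?_
  unfold Sf
  refine Finset.sum_congr rfl fun k _ => ?_
  congr 1
  push_cast
  rw [← mul_assoc, ← pow_mul, ← pow_add]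
  congr 2
  ring

lemma sqrt_sum (h N : ℕ) (hh : 1 ≤ h) :
    ∑ i ∈ Finset.range h, Real.sqrt ((N/h + if i < N % h then 1 else 0 : ℕ) : ℝ) ≤
      Real.sqrt ((h:ℝ) * N) := by
  have e := sum_split' h N hh (fun _ => (1:ℝ))
  simp only [Finset.sum_const, Finset.card_range, nsmul_eq_mul, mul_one] at e
  refine Real.le_sqrt_of_sq_le ?_
  have := sq_sum_le_card_mul_sum_sq (s := Finset.range h)
    (f := fun i => Real.sqrt ((N/h + if i < N % h then 1 else 0 : ℕ) : ℝ))
  refine this.trans (le_of_eq ?_)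
  rw [Finset.card_range, e]
  congr 1
  refine Finset.sum_congr rfl fun i _ => ?_
  rw [Real.sq_sqrt (Nat.cast_nonneg _)]

lemma E_meas (b h N a K : ℕ) (hh : 1 ≤ h) (r : ℝ) :
    MeasurableSet {x | r <
      F K N ((a : ℝ) / (b : ℝ) ^ h) (((a : ℝ) + 1) / (b : ℝ) ^ h) (bseq b x)} := by
  simp only [F_eq b h N a K hh]
  refine measurableSet_lt measurable_const ?_
  have : Measurable fun x => ∑ j ∈ Finset.range N, Zf (b^h) a ((b:ℝ)^(K+j) * x) :=
    Finset.measurable_sum _ fun k _ => (Zf_meas _ a).comp (measurable_const_mul _)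
  exact this.abs

lemma E_per (b h N a M j₀ : ℕ) (hb : 2 ≤ b) (hh : 1 ≤ h) (x : ℝ) :
    F (M + j₀) N ((a : ℝ) / (b : ℝ) ^ h) (((a : ℝ) + 1) / (b : ℝ) ^ h)
      (bseq b (x + ((b:ℝ)^j₀)⁻¹)) =
    F (M + j₀) N ((a : ℝ) / (b : ℝ) ^ h) (((a : ℝ) + 1) / (b : ℝ) ^ h) (bseq b x) := by
  rw [F_eq b h N a _ hh, F_eq b h N a _ hh]
  congr 1
  refine Finset.sum_congr rfl fun j _ => ?_
  have hb0 : (b:ℝ)^j₀ ≠ 0 := by positivity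
  rw [← Zf_per (b^h) a ((b:ℝ)^(M+j₀+j) * x) (b^(M+j))]
  congr 1
  push_cast
  have : (b:ℝ)^(M+j₀+j) = b^(M+j) * b^j₀ := by rw [← pow_add]; congr 1; ring
  rw [this]; field_simp

lemma E_int (b h N : ℕ) (hb : 2 ≤ b) (hh : 1 ≤ h) (hN : h ≤ N)
    (ε : ℝ) (hε : 0 < ε) (K a : ℕ) (ha : a < b ^ h) :
    ∫ x in (0:ℝ)..1, Set.indicator {x | ε * Real.sqrt ((h : ℝ) * N) <
          F K N ((a : ℝ) / (b : ℝ) ^ h) (((a : ℝ) + 1) / (b : ℝ) ^ h) (bseq b x)}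
          (fun _ => (1:ℝ)) x ≤
      2 * h * Real.exp (-ε ^ 2 / (2 * ((b : ℝ) ^ h)⁻¹ * (1 - ((b : ℝ) ^ h)⁻¹) +
            2 / 3 * ε / Real.sqrt ((N / h : ℕ) : ℝ))) := by
  set B := b^h with hBd
  have hBc : (b:ℝ)^h = (B:ℝ) := by rw [hBd]; push_cast; rfl
  have hB2 : 2 ≤ B := hb.trans (Nat.le_self_pow (by omega) b)
  have hq : 1 ≤ N / h := Nat.div_pos hN hh
  set n : ℕ → ℕ := fun i => N/h + if i < N % h then 1 else 0 with hnd
  have hn : ∀ i, 1 ≤ n i := fun i => hq.trans (Nat.le_add_right _ _)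
  have hnq : ∀ i, N / h ≤ n i := fun i => Nat.le_add_right _ _
  set t : ℕ → ℝ := fun i => ε * Real.sqrt (n i) with htd
  have hnp : ∀ i, (0:ℝ) < n i := fun i => by exact_mod_cast hn i
  have ht : ∀ i, 0 < t i := fun i => mul_pos hε (Real.sqrt_pos.2 (hnp i))
  set p := (B:ℝ)⁻¹ with hp
  have hp0 : 0 < p := by positivity
  have hp1 : p < 1 := inv_lt_one_of_one_lt₀ (by exact_mod_cast hB2)
  have hpp : 0 < p * (1-p) := mul_pos hp0 (by linarith)
  set L : ℕ → ℝ := fun i => t i / (n i * (p * (1 - p)) + t i/3) with hLd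
  have hL : ∀ i, 0 < L i := fun i => by
    have := ht i; have := hnp i
    simp only [hLd]; positivity
  set S : ℕ → ℝ → ℝ := fun i x => Sf B a (n i) ((b^(K+i) : ℕ) * x) with hSd
  set G : ℕ → ℝ → ℝ → ℝ := fun i s x => Real.exp (L i * (s * S i x - t i)) with hGd
  have hGi : ∀ i s, IntervalIntegrable (G i s) volume 0 1 := by
    intro i s
    have := (G_ii B a (n i) (by omega) (L i * s) ((b^(K+i):ℕ):ℝ) 0 1).const_mul (Real.exp (-(L i * t i)))
    refine this.congr fun x _ => ?_
    simp only [hGd, hSd]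
    rw [← Real.exp_add]; congr 1; ring
  have hb1 : ∀ i, 1 ≤ b^(K+i) := fun i => Nat.one_le_pow _ _ (by omega)
  set R := Real.exp (-ε ^ 2 / (2 * ((b : ℝ) ^ h)⁻¹ * (1 - ((b : ℝ) ^ h)⁻¹) +
            2 / 3 * ε / Real.sqrt ((N / h : ℕ) : ℝ))) with hR
  have hbd : ∀ i s, |s| = 1 → ∫ x in (0:ℝ)..1, G i s x ≤ R := by
    intro i s hs
    refine (bern B a (n i) (b^(K+i)) hB2 ha (hn i) (hb1 i) (t i) s (ht i) hs (L i) rfl).trans ?_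
    refine Real.exp_le_exp.2 ?_
    rw [hBc, ← hp]
    have hsp : 0 < Real.sqrt (n i) := Real.sqrt_pos.2 (hnp i)
    have hsq : Real.sqrt (n i) ^ 2 = n i := Real.sq_sqrt (hnp i).le
    have hqp : 0 < Real.sqrt ((N / h : ℕ) : ℝ) := Real.sqrt_pos.2 (by exact_mod_cast hq)
    have e : -(t i)^2 / (2 * (n i * (p * (1-p)) + t i / 3)) =
        -ε^2 / (2 * p * (1-p) + 2/3*ε / Real.sqrt (n i)) := by
      have : 2 * (n i * (p * (1-p)) + t i / 3) = Real.sqrt (n i) ^ 2 *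
          (2 * p * (1-p) + 2/3*ε / Real.sqrt (n i)) := by
        simp only [htd]
        have e1 : Real.sqrt (n i) ^ 2 * (2 / 3 * ε / Real.sqrt (n i)) = 2/3 * ε * Real.sqrt (n i) := by
          field_simp
        rw [mul_add (Real.sqrt (n i) ^ 2), e1, hsq]
        ring
      rw [this]
      have : -(t i)^2 = Real.sqrt (n i)^2 * (-ε^2) := by simp only [htd]; ring
      rw [this, mul_div_mul_left _ _ (by positivity)]
    rw [e, neg_div, neg_div, neg_le_neg_iff]
    have hpp2 : 0 < 2 * p * (1-p) := by linarith
    gcongr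
    exact_mod_cast hnq i
  have hpt : ∀ x ∈ Set.Icc (0:ℝ) 1, Set.indicator {x | ε * Real.sqrt ((h : ℝ) * N) <
          F K N ((a : ℝ) / (b : ℝ) ^ h) (((a : ℝ) + 1) / (b : ℝ) ^ h) (bseq b x)}
          (fun _ => (1:ℝ)) x ≤ ∑ i ∈ Finset.range h, (G i 1 x + G i (-1) x) := by
    intro x _
    have hGp : ∀ i s, 0 < G i s x := fun i s => Real.exp_pos _
    refine Set.indicator_apply_le' (fun hx => ?_) (fun _ => Finset.sum_nonneg fun i _ =>
      (add_pos (hGp i 1) (hGp i (-1))).le)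
    simp only [Set.mem_ofPred_eq] at hx
    rw [F_eq' b h N a K hh] at hx
    have h1 : ∑ i ∈ Finset.range h, t i < ∑ i ∈ Finset.range h, |S i x| := by
      calc ∑ i ∈ Finset.range h, t i = ε * ∑ i ∈ Finset.range h, Real.sqrt (n i) := by
            rw [Finset.mul_sum]
        _ ≤ ε * Real.sqrt ((h : ℝ) * N) := mul_le_mul_of_nonneg_left (sqrt_sum h N hh) hε.le
        _ < _ := hx
        _ ≤ _ := Finset.abs_sum_le_sum_abs _ _
    obtain ⟨i, hi, hlt⟩ := Finset.exists_lt_of_sum_lt h1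
    have h2 : 1 ≤ G i 1 x + G i (-1) x := by
      rcases lt_abs.1 hlt with h | h
      · have : 1 ≤ G i 1 x := Real.one_le_exp (mul_nonneg (hL i).le (by linarith))
        linarith [hGp i (-1)]
      · have : 1 ≤ G i (-1) x := Real.one_le_exp (mul_nonneg (hL i).le (by linarith))
        linarith [hGp i 1]
    exact h2.trans (Finset.single_le_sum (f := fun i => G i 1 x + G i (-1) x)
      (fun i _ => (add_pos (hGp i 1) (hGp i (-1))).le) hi)
  have hint : IntervalIntegrable (fun x => ∑ i ∈ Finset.range h, (G i 1 x + G i (-1) x)) volume 0 1 := by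
    have := IntervalIntegrable.sum (μ := volume) (a := 0) (b := 1) (Finset.range h)
      (f := fun i x => G i 1 x + G i (-1) x) (fun i _ => (hGi i 1).add (hGi i (-1)))
    have e : (fun x => ∑ i ∈ Finset.range h, (G i 1 x + G i (-1) x)) =
        ∑ i ∈ Finset.range h, (fun x => G i 1 x + G i (-1) x) := by
      ext x; simp
    rw [e]; exact this
  refine (intervalIntegral.integral_mono_on zero_le_one
    (ii_of_bd _ (measurable_const.indicator (E_meas b h N a K hh _)) 1 (fun x => ?_) 0 1)
    hint hpt).trans ?_
  · by_cases hx : x ∈ {x | ε * Real.sqrt ((h : ℝ) * N) <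
          F K N ((a : ℝ) / (b : ℝ) ^ h) (((a : ℝ) + 1) / (b : ℝ) ^ h) (bseq b x)}
    · rw [Set.indicator_of_mem hx]; simp
    · rw [Set.indicator_of_notMem hx]; simp
  rw [intervalIntegral.integral_finsetSum (fun i _ => (hGi i 1).add (hGi i (-1)))]
  calc _ ≤ ∑ i ∈ Finset.range h, (R + R) := by
        refine Finset.sum_le_sum fun i _ => ?_
        rw [intervalIntegral.integral_add (hGi i 1) (hGi i (-1))]
        exact add_le_add (hbd i 1 (by simp)) (hbd i (-1) (by simp))
    _ = 2 * h * R := by simp; ring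

lemma per_set (E A : Set ℝ) (hE : MeasurableSet E) (m : ℕ) (hm : 1 ≤ m)
    (hper : ∀ x, x + (m:ℝ)⁻¹ ∈ E ↔ x ∈ E) (hA : A ⊆ Set.Icc 0 1) (hA' : A.OrdConnected)
    (P : ℝ) (hP : ∫ x in (0:ℝ)..1, E.indicator (fun _ => (1:ℝ)) x ≤ P) :
    volume (A ∩ E) ≤ ENNReal.ofReal ((volume A).toReal * P + (m:ℝ)⁻¹) := by
  rcases A.eq_empty_or_nonempty with rfl | hne
  · simp
  have hmp : (0:ℝ) < m := by exact_mod_cast hm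
  set T := (m:ℝ)⁻¹ with hT
  have hTp : 0 < T := by positivity
  have hbb : BddBelow A := bddBelow_Icc.mono hA
  have hba : BddAbove A := bddAbove_Icc.mono hA
  set c := sInf A with hc
  set d := sSup A with hd
  have hAcd : A ⊆ Set.Icc c d := fun x hx => ⟨csInf_le hbb hx, le_csSup hba hx⟩
  have hcd : c ≤ d := Real.sInf_le_sSup A hbb hba
  have hIA : Set.Ioo c d ⊆ A := by
    intro x hx
    obtain ⟨y, hy, hyx⟩ := (csInf_lt_iff hbb hne).1 hx.1
    obtain ⟨z, hz, hxz⟩ := (lt_csSup_iff hba hne).1 hx.2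
    exact hA'.out hy hz ⟨hyx.le, hxz.le⟩
  have hfin : volume A ≠ ⊤ := ((measure_mono hAcd).trans_lt (by simp)).ne
  have hvA : d - c ≤ (volume A).toReal := by
    have := ENNReal.toReal_mono hfin (measure_mono (μ := volume) hIA)
    rwa [Real.volume_Ioo, ENNReal.toReal_ofReal (by linarith)] at this
  set f := E.indicator (fun _ => (1:ℝ)) with hf
  have hfper : Function.Periodic f T := by
    intro x
    by_cases hx : x ∈ E
    · rw [hf, Set.indicator_of_mem hx, Set.indicator_of_mem ((hper x).2 hx)]
    · rw [hf, Set.indicator_of_notMem hx, Set.indicator_of_notMem (fun h => hx ((hper x).1 h))]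
  have hfm : Measurable f := measurable_const.indicator hE
  have hf01 : ∀ x, 0 ≤ f x ∧ f x ≤ 1 := fun x => by
    by_cases hx : x ∈ E
    · rw [hf, Set.indicator_of_mem hx]; norm_num
    · rw [hf, Set.indicator_of_notMem hx]; norm_num
  have hfi : ∀ a b, IntervalIntegrable f volume a b := fun a b =>
    ii_of_bd f hfm 1 (fun x => by rw [abs_of_nonneg (hf01 x).1]; exact (hf01 x).2) a b
  set n := ⌊(d - c) / T⌋₊ with hn
  have hn1 : (n:ℝ) * T ≤ d - c := by
    rw [← le_div_iff₀ hTp]; exact Nat.floor_le (div_nonneg (by linarith) hTp.le)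
  have hn2 : d - c < (n + 1) * T := by
    rw [← div_lt_iff₀ hTp]; exact Nat.lt_floor_add_one _
  have i1 : ∫ x in c..(c + n * T), f x = n * ∫ x in (0:ℝ)..T, f x := by
    have := hfper.intervalIntegral_add_zsmul_eq n c hfi
    rw [hfper.intervalIntegral_add_eq c 0] at this
    simpa using this
  have i2 : ∫ x in (0:ℝ)..1, f x = m * ∫ x in (0:ℝ)..T, f x := by
    have := hfper.intervalIntegral_add_zsmul_eq m 0 hfi
    have hmT : (m:ℝ) * T = 1 := by rw [hT]; field_simp
    simpa [hmT] using this
  have hIP : 0 ≤ ∫ x in (0:ℝ)..1, f x :=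
    intervalIntegral.integral_nonneg zero_le_one fun x _ => (hf01 x).1
  have i3 : ∫ x in c..(c + n * T), f x ≤ (volume A).toReal * P := by
    have : ∫ x in c..(c + n * T), f x = (n * T) * ∫ x in (0:ℝ)..1, f x := by
      rw [i1, i2, hT]; field_simp
    rw [this]
    exact mul_le_mul (hn1.trans hvA) hP hIP ENNReal.toReal_nonneg
  have hle : c ≤ c + n * T := by have : 0 ≤ n * T := by positivity
                                 linarith
  have i4 : volume (Set.Ioc c (c + n*T) ∩ E) = ENNReal.ofReal (∫ x in c..(c + n * T), f x) := by
    rw [intervalIntegral.integral_of_le hle, hf, integral_indicator_const _ hE]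
    simp only [smul_eq_mul, mul_one, measureReal_def]
    rw [ENNReal.ofReal_toReal (measure_ne_top _ _), Measure.restrict_apply hE, Set.inter_comm]
  have hsub : A ∩ E ⊆ ({c} ∪ (Set.Ioc c (c + n*T) ∩ E)) ∪ Set.Ioc (c + n*T) (c + n*T + T) := by
    rintro x ⟨hxA, hxE⟩
    have hx := hAcd hxA
    rcases eq_or_lt_of_le hx.1 with h | h
    · left; left; exact h.symm
    · rcases le_or_gt x (c + n*T) with h' | h'
      · left; right; exact ⟨⟨h, h'⟩, hxE⟩
      · right; exact ⟨h', by linarith [hx.2]⟩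
  have hPA : 0 ≤ (volume A).toReal * P := mul_nonneg ENNReal.toReal_nonneg (hIP.trans hP)
  calc volume (A ∩ E) ≤ volume ({c} ∪ (Set.Ioc c (c + n*T) ∩ E)) +
        volume (Set.Ioc (c + n*T) (c + n*T + T)) := (measure_mono hsub).trans (measure_union_le _ _)
    _ ≤ (volume {c} + volume (Set.Ioc c (c + n*T) ∩ E)) +
        volume (Set.Ioc (c + n*T) (c + n*T + T)) := by gcongr; exact measure_union_le _ _
    _ = ENNReal.ofReal (∫ x in c..(c + n * T), f x) + ENNReal.ofReal T := by
        rw [i4, Real.volume_Ioc]; simp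
    _ ≤ ENNReal.ofReal ((volume A).toReal * P) + ENNReal.ofReal T := by gcongr
    _ = _ := (ENNReal.ofReal_add hPA hTp.le).symm

theorem stmt3 (b h N : ℕ) (hb : 2 ≤ b) (hh : 1 ≤ h) (hN : h ≤ N)
    (ε : ℝ) (hε : 0 < ε) (M a : ℕ) (ha : a < b ^ h)
    (A : Set ℝ) (hA : A ⊆ Set.Icc (0 : ℝ) 1) (hA' : A.OrdConnected)
    (j₀ : ℕ) (hj₀ : 1 ≤ j₀) :
    MeasureTheory.volume {x ∈ A |
        ε * Real.sqrt ((h : ℝ) * N) <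
          F (M + j₀) N ((a : ℝ) / (b : ℝ) ^ h) (((a : ℝ) + 1) / (b : ℝ) ^ h) (bseq b x)} ≤
      ENNReal.ofReal (2 * (MeasureTheory.volume A).toReal * h * Real.exp (-ε ^ 2 /
          (2 * ((b : ℝ) ^ h)⁻¹ * (1 - ((b : ℝ) ^ h)⁻¹) +
            2 / 3 * ε / Real.sqrt ((N / h : ℕ) : ℝ))) +
        2 * ((b : ℝ) ^ j₀)⁻¹) := by
  have key := per_set {x | ε * Real.sqrt ((h : ℝ) * N) <
          F (M + j₀) N ((a : ℝ) / (b : ℝ) ^ h) (((a : ℝ) + 1) / (b : ℝ) ^ h) (bseq b x)} A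
    (E_meas b h N a _ hh _) (b^j₀) (Nat.one_le_pow _ _ (by omega))
    (fun x => by
      simp only [Set.mem_ofPred_eq, Nat.cast_pow]
      rw [E_per b h N a M j₀ hb hh x]) hA hA' _ (E_int b h N hb hh hN ε hε (M+j₀) a ha)
  refine le_trans key (ENNReal.ofReal_le_ofReal ?_)
  push_cast
  have : 0 ≤ ((b:ℝ)^j₀)⁻¹ := by positivity
  refine add_le_add (le_of_eq (by ring)) (by linarith)
end
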